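/- Let q_e : 𝕋_L → ℝ be smooth and positive, ω₀ > 0, and let Q, F, G be smooth on 𝕋_L × [0,∞) with smooth b : 𝕋_L → ℝ satisfying the linear Prandtl problem ∂_s Q − ω₀ q_e(s) ∂_ψ² Q = F + ∂_ψ² G on 𝕋_L × (0,∞), Q(s,0) = b(s), Q(s,ψ) → 0 as ψ → ∞, with the decay conditions ∫₀^L q_e Q ds → 0 and ∂_ψ ∫₀^L q_e Q ds → 0 and ∫₀^L G ds → 0 as ψ → ∞. Assume the data satisfy the Feynman–Lagerstrom compatibility condition: ∫₀^L q_e(s) b(s) ds = −(1/ω₀)( ∫₀^∞ y ∫₀^L F(s,y) ds dy + ∫₀^L G(s,0) ds ). Then for all integers k, m ≥ 0 there is a constant C (depending on k, m, L, ω₀, q_e) such that ‖Q‖_{X_{k,m}} ≤ C ( Σ_{k'=0}^{k} ‖⟨ψ⟩^{m+4} ∂_s^{k'} F‖_{L²} + Σ_{k'=0}^{k} Σ_{j=0}^{2} ‖⟨ψ⟩^{m} ∂_s^{k'} ∂_ψ^{j} G‖_{L²} + ‖b‖_{H^{k+1}(𝕋_L)} ), provided the right-hand side is finite. -/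

import Mathlib

open MeasureTheory Set Function Filter

/-- `k`-th partial derivative in the tangential variable `s` of a function on
`𝕋_L × [0,∞)` (represented as a curried function `ℝ → ℝ → ℝ`). -/
noncomputable def dS (k : ℕ) (h : ℝ → ℝ → ℝ) : ℝ → ℝ → ℝ :=
  fun s ψ => iteratedDeriv k (fun s' => h s' ψ) s

/-- `j`-th partial derivative in the normal (von Mises) variable `ψ`. -/
noncomputable def dPsi (j : ℕ) (h : ℝ → ℝ → ℝ) : ℝ → ℝ → ℝ :=
  fun s ψ => iteratedDeriv j (fun ψ' => h s ψ') ψ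

/-- Squared `L²` norm over `𝕋_L × ℝ₊` (fundamental domain `(0,L] × (0,∞)`). -/
noncomputable def L2sq (L : ℝ) (h : ℝ → ℝ → ℝ) : ℝ :=
  ∫ p in Ioc (0:ℝ) L ×ˢ Ioi (0:ℝ), (h p.1 p.2) ^ 2

/-- Square-integrability over `𝕋_L × ℝ₊`. -/
def FiniteL2 (L : ℝ) (h : ℝ → ℝ → ℝ) : Prop :=
  IntegrableOn (fun p : ℝ × ℝ => (h p.1 p.2) ^ 2) (Ioc (0:ℝ) L ×ˢ Ioi (0:ℝ))

/-- The weight `⟨ψ⟩^m h`. -/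
noncomputable def wt (m : ℕ) (h : ℝ → ℝ → ℝ) : ℝ → ℝ → ℝ :=
  fun s ψ => (1 + ψ) ^ m * h s ψ

/-- Squared `X_{k,m}` norm:
`‖h‖²_{X_{k,m}} = Σ_{k'≤k} Σ_{m'≤m} (‖⟨ψ⟩^{m'}∂_s^{k'}h‖² + ‖⟨ψ⟩^{m'}∂_s^{k'+1}h‖²
+ ‖⟨ψ⟩^{m'}∂_ψ∂_s^{k'}h‖² + ‖⟨ψ⟩^{m'}∂_ψ²∂_s^{k'}h‖²)`. -/
noncomputable def XnormSq (L : ℝ) (k m : ℕ) (h : ℝ → ℝ → ℝ) : ℝ :=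
  ∑ k' ∈ Finset.range (k+1), ∑ m' ∈ Finset.range (m+1),
    (L2sq L (wt m' (dS k' h)) + L2sq L (wt m' (dS (k'+1) h))
      + L2sq L (wt m' (dPsi 1 (dS k' h))) + L2sq L (wt m' (dPsi 2 (dS k' h))))

/-- The `X_{k,m}` norm. -/
noncomputable def Xnorm (L : ℝ) (k m : ℕ) (h : ℝ → ℝ → ℝ) : ℝ :=
  Real.sqrt (XnormSq L k m h)

/-- Membership in the space `X_{k,m}`: all the defining integrands are integrable. -/
def XFinite (L : ℝ) (k m : ℕ) (h : ℝ → ℝ → ℝ) : Prop :=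
  ∀ k' ≤ k, ∀ m' ≤ m,
    FiniteL2 L (wt m' (dS k' h)) ∧ FiniteL2 L (wt m' (dS (k'+1) h))
      ∧ FiniteL2 L (wt m' (dPsi 1 (dS k' h))) ∧ FiniteL2 L (wt m' (dPsi 2 (dS k' h)))

/-- Joint smoothness of a curried function of two real variables. -/
def Smooth2 (h : ℝ → ℝ → ℝ) : Prop :=
  ContDiff ℝ (⊤ : ℕ∞) (fun p : ℝ × ℝ => h p.1 p.2)

/-- Periodicity in the first (tangential) variable. -/
def PeriodicS (L : ℝ) (h : ℝ → ℝ → ℝ) : Prop :=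
  ∀ ψ : ℝ, Function.Periodic (fun s => h s ψ) L

/-- Squared `H^n` norm of a function on `𝕋_L`. -/
noncomputable def HnormSq (L : ℝ) (n : ℕ) (b : ℝ → ℝ) : ℝ :=
  ∑ j ∈ Finset.range (n+1), ∫ s in (0:ℝ)..L, (iteratedDeriv j b s) ^ 2

/-!
Write `κ = ω₀ q_e`. For a solution of `∂_sP - κ∂_ψ²P = f` with zero boundary values, expand
`(∂_sP - κ∂_ψ²P)²/κ`: the mixed term `2 ∫∫ ∂_sP ∂_ψ²P` equals `-∫∫ ∂_s(∂_ψP)² = 0` by periodicity,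
so `∂_sP` and `∂_ψ²P` are controlled by `f`. The integration by parts is justified by a cutoff
`(1 - rψ)⁴` with `r → 0`, which needs only `∫_0^R ‖P‖² dψ = O(R²)`. Poincaré's inequality in `s`,
together with a bound for the zero mode `∫ κP ds`, then controls `P` itself. Powers of the weight
are gained one at a time, because the commutator of the operator with `⟨ψ⟩` involves only `∂_ψP`.
Nonzero boundary values are removed by subtracting `e^{-ψ} b(s)`.

The zero mode `B = ∫ (κQ + G) ds` satisfies `B'' = -∫ F ds` and `B → 0`, so two Hardy inequalities
bound it at the cost of four powers of the weight on `F`. Tangential derivatives follow by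
induction, since `∂_s^n Q` solves the same equation with lower-order commutator terms in the source.

The uniformity of the constants is expressed by `=O[⊤]` over the family of all admissible data.
-/

/-! ### Partial derivatives -/

section PartialDerivatives

variable {h : ℝ → ℝ → ℝ} {s ψ d : ℝ}

theorem dS_zero (h : ℝ → ℝ → ℝ) : dS 0 h = h := by
  ext; simp [dS]

theorem dPsi_zero (h : ℝ → ℝ → ℝ) : dPsi 0 h = h := by
  ext; simp [dPsi]

theorem dS_dS (j k : ℕ) (h : ℝ → ℝ → ℝ) : dS j (dS k h) = dS (j + k) h := by
  ext
  simp only [dS, iteratedDeriv_eq_iterate, iterate_add_apply]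

theorem dPsi_dPsi (j k : ℕ) (h : ℝ → ℝ → ℝ) : dPsi j (dPsi k h) = dPsi (j + k) h := by
  ext
  simp only [dPsi, iteratedDeriv_eq_iterate, iterate_add_apply]

theorem dS_one_eq (H : HasDerivAt (fun s => h s ψ) d s) : dS 1 h s ψ = d := by
  simpa only [dS, iteratedDeriv_one] using H.deriv

theorem dPsi_one_eq (H : HasDerivAt (h s) d ψ) : dPsi 1 h s ψ = d := by
  simpa only [dPsi, iteratedDeriv_one] using H.deriv

namespace Smooth2

protected theorem continuous (hh : Smooth2 h) : Continuous (uncurry h) :=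
  ContDiff.continuous hh

protected theorem wt (hh : Smooth2 h) (m : ℕ) : Smooth2 (wt m h) :=
  ContDiff.mul (by fun_prop) hh

theorem contDiff_left (hh : Smooth2 h) (ψ : ℝ) : ContDiff ℝ (⊤ : ℕ∞) fun s => h s ψ :=
  ContDiff.comp hh (contDiff_id.prodMk contDiff_const)

theorem contDiff_right (hh : Smooth2 h) (s : ℝ) : ContDiff ℝ (⊤ : ℕ∞) (h s) :=
  ContDiff.comp (g := uncurry h) hh (contDiff_const.prodMk contDiff_id)

theorem hasDerivAt_left_fderiv (hh : Smooth2 h) (s ψ : ℝ) :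
    HasDerivAt (fun s => h s ψ) (fderiv ℝ (uncurry h) (s, ψ) (1, 0)) s :=
  (ContDiff.differentiable hh (by simp) (s, ψ)).hasFDerivAt.comp_hasDerivAt (f := fun s => (s, ψ)) s
    ((hasDerivAt_id s).prodMk (hasDerivAt_const s ψ))

theorem hasDerivAt_right_fderiv (hh : Smooth2 h) (s ψ : ℝ) :
    HasDerivAt (h s) (fderiv ℝ (uncurry h) (s, ψ) (0, 1)) ψ :=
  (ContDiff.differentiable hh (by simp) (s, ψ)).hasFDerivAt.comp_hasDerivAt ψ
    ((hasDerivAt_const ψ s).prodMk (hasDerivAt_id ψ))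

theorem hasDerivAt_left (hh : Smooth2 h) (s ψ : ℝ) :
    HasDerivAt (fun s => h s ψ) (dS 1 h s ψ) s := by
  rw [dS_one_eq (hh.hasDerivAt_left_fderiv s ψ)]
  exact hh.hasDerivAt_left_fderiv s ψ

theorem hasDerivAt_right (hh : Smooth2 h) (s ψ : ℝ) : HasDerivAt (h s) (dPsi 1 h s ψ) ψ := by
  rw [dPsi_one_eq (hh.hasDerivAt_right_fderiv s ψ)]
  exact hh.hasDerivAt_right_fderiv s ψ

theorem uncurry_dS_one (hh : Smooth2 h) :
    uncurry (dS 1 h) = fun p => fderiv ℝ (uncurry h) p (1, 0) :=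
  funext fun p => dS_one_eq (hh.hasDerivAt_left_fderiv p.1 p.2)

theorem uncurry_dPsi_one (hh : Smooth2 h) :
    uncurry (dPsi 1 h) = fun p => fderiv ℝ (uncurry h) p (0, 1) :=
  funext fun p => dPsi_one_eq (hh.hasDerivAt_right_fderiv p.1 p.2)

theorem contDiff_fderiv (hh : Smooth2 h) : ContDiff ℝ (⊤ : ℕ∞) (fderiv ℝ (uncurry h)) :=
  ContDiff.fderiv_right hh (by simp)

protected theorem dS (hh : Smooth2 h) (k : ℕ) : Smooth2 (dS k h) := by
  induction k with
  | zero => rwa [dS_zero]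
  | succ k ih =>
    rw [add_comm, ← dS_dS]
    have := ih.contDiff_fderiv.clm_apply (contDiff_const (c := ((1, 0) : ℝ × ℝ)))
    rw [← ih.uncurry_dS_one] at this
    exact this

protected theorem dPsi (hh : Smooth2 h) (j : ℕ) : Smooth2 (dPsi j h) := by
  induction j with
  | zero => rwa [dPsi_zero]
  | succ j ih =>
    rw [add_comm, ← dPsi_dPsi]
    have := ih.contDiff_fderiv.clm_apply (contDiff_const (c := ((0, 1) : ℝ × ℝ)))
    rw [← ih.uncurry_dPsi_one] at this
    exact this

theorem dS_one_dPsi_one (hh : Smooth2 h) :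
    dS 1 (dPsi 1 h) = dPsi 1 (dS 1 h) := by
  have hd (p : ℝ × ℝ) (v : ℝ × ℝ) : fderiv ℝ (fun p => fderiv ℝ (uncurry h) p v) p
      = (fderiv ℝ (fderiv ℝ (uncurry h)) p).flip v := by
    simp [fderiv_clm_apply (hh.contDiff_fderiv.differentiable (by simp) p)
      (differentiableAt_const v)]
  have hsymm (p : ℝ × ℝ) : IsSymmSndFDerivAt ℝ (uncurry h) p :=
    (ContDiff.contDiffAt hh).isSymmSndFDerivAt
      (by simp only [minSmoothness_of_isRCLikeNormedField]; exact WithTop.coe_le_coe.2 le_top)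
  apply uncurry_injective
  rw [(hh.dPsi 1).uncurry_dS_one, (hh.dS 1).uncurry_dPsi_one, hh.uncurry_dPsi_one,
    hh.uncurry_dS_one]
  ext p
  simp only [hd, ContinuousLinearMap.flip_apply]
  exact hsymm p (1, 0) (0, 1)

theorem dS_dPsi_comm (hh : Smooth2 h) (k j : ℕ) :
    dS k (dPsi j h) = dPsi j (dS k h) := by
  have hone (j : ℕ) : ∀ {h}, Smooth2 h →
      dS 1 (dPsi j h) = dPsi j (dS 1 h) := by
    induction j with
    | zero => simp only [dPsi_zero, implies_true]
    | succ j ih =>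
      intro h hh
      rw [← dPsi_dPsi j 1, ih (hh.dPsi 1), hh.dS_one_dPsi_one, dPsi_dPsi]
  induction k with
  | zero => simp only [dS_zero]
  | succ k ih => rw [add_comm, ← dS_dS 1 k, ih, hone j (hh.dS k), dS_dS]

theorem dS_add {f g : ℝ → ℝ → ℝ} (hf : Smooth2 f) (hg : Smooth2 g) (k : ℕ) :
    dS k (fun s ψ => f s ψ + g s ψ) = fun s ψ => dS k f s ψ + dS k g s ψ :=
  funext₂ fun _ ψ => iteratedDeriv_fun_add (contDiff_infty.1 (hf.contDiff_left ψ) k).contDiffAt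
    (contDiff_infty.1 (hg.contDiff_left ψ) k).contDiffAt

theorem dPsi_add {f g : ℝ → ℝ → ℝ} (hf : Smooth2 f) (hg : Smooth2 g) (j : ℕ) :
    dPsi j (fun s ψ => f s ψ + g s ψ) = fun s ψ => dPsi j f s ψ + dPsi j g s ψ :=
  funext₂ fun s _ => iteratedDeriv_fun_add (contDiff_infty.1 (hf.contDiff_right s) j).contDiffAt
    (contDiff_infty.1 (hg.contDiff_right s) j).contDiffAt

end Smooth2

theorem periodic_iteratedDeriv {f : ℝ → ℝ} {L : ℝ} (hf : Periodic f L) (n : ℕ) :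
    Periodic (iteratedDeriv n f) L := fun s => by
  rw [← congrFun (iteratedDeriv_comp_add_const n f L), hf.funext]

namespace PeriodicS

variable {L : ℝ}

protected theorem dS (hp : PeriodicS L h) (k : ℕ) : PeriodicS L (dS k h) := fun ψ =>
  periodic_iteratedDeriv (hp ψ) k

protected theorem dPsi (hp : PeriodicS L h) (j : ℕ) : PeriodicS L (dPsi j h) := fun ψ s => by
  simp only [dPsi, fun t => hp t s]

end PeriodicS

end PartialDerivatives

/-! ### Slices -/

section Slices

variable {L : ℝ} {h : ℝ → ℝ → ℝ}

/-- The squared `L²(𝕋_L)` norm of the slice of `h` at height `ψ`. -/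
noncomputable def sliceSq (L : ℝ) (h : ℝ → ℝ → ℝ) (ψ : ℝ) : ℝ :=
  ∫ s in (0 : ℝ)..L, h s ψ ^ 2

/-- The integral of `h` over the slice at height `ψ`, with tangential weight `ρ`. -/
noncomputable def sliceMean (L : ℝ) (ρ : ℝ → ℝ) (h : ℝ → ℝ → ℝ) (ψ : ℝ) : ℝ :=
  ∫ s in (0 : ℝ)..L, ρ s * h s ψ

theorem sliceSq_const (L : ℝ) (v : ℝ → ℝ) (ψ : ℝ) : sliceSq L (fun _ => v) ψ = L * v ψ ^ 2 := by
  simp [sliceSq]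

theorem continuous_integral_slice (L : ℝ) (hh : Continuous (uncurry h)) :
    Continuous fun ψ => ∫ s in (0 : ℝ)..L, h s ψ :=
  intervalIntegral.continuous_parametric_intervalIntegral_of_continuous'
    (f := fun ψ s => h s ψ) (hh.comp continuous_swap) 0 L

theorem continuous_sliceSq (L : ℝ) (hh : Continuous (uncurry h)) : Continuous (sliceSq L h) :=
  continuous_integral_slice L (h := fun s ψ => h s ψ ^ 2) (hh.pow 2)

theorem continuous_sliceMean (L : ℝ) {ρ : ℝ → ℝ} (hρ : Continuous ρ)
    (hh : Continuous (uncurry h)) : Continuous (sliceMean L ρ h) :=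
  continuous_integral_slice L (h := fun s ψ => ρ s * h s ψ) ((hρ.comp continuous_fst).mul hh)

theorem Smooth2.hasDerivAt_integral (hh : Smooth2 h) (L ψ : ℝ) :
    HasDerivAt (fun ψ => ∫ s in (0 : ℝ)..L, h s ψ) (∫ s in (0 : ℝ)..L, dPsi 1 h s ψ) ψ := by
  obtain ⟨C, hC⟩ := (isCompact_uIcc.prod (isCompact_closedBall ψ 1)).exists_bound_of_continuousOn
    (s := uIcc 0 L ×ˢ Metric.closedBall ψ 1) (hh.dPsi 1).continuous.continuousOn
  refine (intervalIntegral.hasDerivAt_integral_of_dominated_loc_of_deriv_le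
    (F := fun ψ s => h s ψ) (F' := fun ψ s => dPsi 1 h s ψ) (bound := fun _ => C)
    (Metric.closedBall_mem_nhds ψ one_pos) ?_ ?_ ?_ ?_ ?_ ?_).2
  · exact .of_forall fun t => (hh.contDiff_left t).continuous.aestronglyMeasurable
  · exact (hh.contDiff_left ψ).continuous.intervalIntegrable 0 L
  · exact ((hh.dPsi 1).contDiff_left ψ).continuous.aestronglyMeasurable
  · exact .of_forall fun s hs t ht => hC (s, t) ⟨uIoc_subset_uIcc hs, ht⟩
  · exact intervalIntegrable_const
  · exact .of_forall fun s _ t _ => hh.hasDerivAt_right s t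

theorem integral_dS_one_eq_zero (hh : Smooth2 h) (hp : PeriodicS L h) (ψ : ℝ) :
    ∫ s in (0 : ℝ)..L, dS 1 h s ψ = 0 := by
  rw [intervalIntegral.integral_eq_sub_of_hasDerivAt (fun s _ => hh.hasDerivAt_left s ψ)
    (((hh.dS 1).contDiff_left ψ).continuous.intervalIntegrable 0 L), sub_eq_zero]
  simpa using hp ψ 0

theorem continuous_slice (hh : Continuous (uncurry h)) (ψ : ℝ) : Continuous fun s => h s ψ :=
  hh.comp (by fun_prop : Continuous fun s : ℝ => (s, ψ))

variable [hL : Fact (0 < L)]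

theorem sliceSq_nonneg (h : ℝ → ℝ → ℝ) (ψ : ℝ) : 0 ≤ sliceSq L h ψ :=
  intervalIntegral.integral_nonneg hL.out.le fun _ _ => sq_nonneg _

theorem integral_mono_of_continuous {u v : ℝ → ℝ} (hu : Continuous u) (hv : Continuous v)
    (huv : ∀ s, u s ≤ v s) : ∫ s in (0 : ℝ)..L, u s ≤ ∫ s in (0 : ℝ)..L, v s :=
  intervalIntegral.integral_mono hL.out.le (hu.intervalIntegrable 0 L)
    (hv.intervalIntegrable 0 L) huv

theorem sliceSq_add_le {f g : ℝ → ℝ → ℝ} (hf : Continuous (uncurry f))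
    (hg : Continuous (uncurry g)) (ψ : ℝ) :
    sliceSq L (fun s ψ => f s ψ + g s ψ) ψ ≤ 2 * (sliceSq L f ψ + sliceSq L g ψ) := by
  have hfψ := continuous_slice hf ψ
  have hgψ := continuous_slice hg ψ
  rw [sliceSq, sliceSq, sliceSq, ← intervalIntegral.integral_add
    ((hfψ.fun_pow 2).intervalIntegrable 0 L) ((hgψ.fun_pow 2).intervalIntegrable 0 L),
    ← intervalIntegral.integral_const_mul]
  exact integral_mono_of_continuous ((hfψ.add hgψ).pow 2)
    (((hfψ.pow 2).add (hgψ.pow 2)).const_mul 2) fun _ => add_sq_le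

theorem sliceSq_sub_le {f g : ℝ → ℝ → ℝ} (hf : Continuous (uncurry f))
    (hg : Continuous (uncurry g)) (ψ : ℝ) :
    sliceSq L (fun s ψ => f s ψ - g s ψ) ψ ≤ 2 * (sliceSq L f ψ + sliceSq L g ψ) := by
  simpa only [sliceSq, neg_sq, ← sub_eq_add_neg]
    using sliceSq_add_le hf (g := fun s ψ => -g s ψ) hg.neg ψ

theorem finiteL2_iff (hh : Continuous (uncurry h)) :
    FiniteL2 L h ↔ IntegrableOn (sliceSq L h) (Ioi 0) := by
  have hslice (ψ : ℝ) : IntegrableOn (fun s => h s ψ ^ 2) (Ioc 0 L) :=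
    ((continuous_slice hh ψ).pow 2).integrableOn_Ioc
  have hsq : sliceSq L h = fun ψ => ∫ s in Ioc 0 L, h s ψ ^ 2 :=
    funext fun _ => intervalIntegral.integral_of_le hL.out.le
  rw [hsq, FiniteL2, IntegrableOn, Measure.volume_eq_prod, ← Measure.prod_restrict,
    integrable_prod_iff' (f := fun p : ℝ × ℝ => h p.1 p.2 ^ 2) (hh.pow 2).aestronglyMeasurable]
  simp only [norm_pow, Real.norm_eq_abs, sq_abs]
  exact and_iff_right (.of_forall hslice)

theorem FiniteL2.L2sq_eq (hh : FiniteL2 L h) : L2sq L h = ∫ ψ in Ioi 0, sliceSq L h ψ := by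
  rw [FiniteL2, IntegrableOn, Measure.volume_eq_prod, ← Measure.prod_restrict] at hh
  rw [L2sq, Measure.volume_eq_prod, ← Measure.prod_restrict, integral_prod_symm _ hh]
  simp only [sliceSq, intervalIntegral.integral_of_le hL.out.le]

theorem L2sq_nonneg (L : ℝ) (h : ℝ → ℝ → ℝ) : 0 ≤ L2sq L h :=
  integral_nonneg fun _ => sq_nonneg _

theorem FiniteL2.intervalIntegral_le (hh : FiniteL2 L h) (hc : Continuous (uncurry h)) {R : ℝ}
    (hR : 0 ≤ R) : ∫ ψ in (0 : ℝ)..R, sliceSq L h ψ ≤ L2sq L h := by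
  rw [hh.L2sq_eq, intervalIntegral.integral_of_le hR]
  exact setIntegral_mono_set ((finiteL2_iff hc).1 hh) (.of_forall (sliceSq_nonneg h))
    Ioc_subset_Ioi_self.eventuallyLE

end Slices

/-! ### Uniform weighted square integrability -/

section UniformBounds

open Asymptotics

/-- Uniform integrability of a family on `(0,∞)`: the integrals of `φ i` over the half-line are
`O(N i)`, with one constant for all `i`. -/
structure L1BigO {ι : Type*} (φ : ι → ℝ → ℝ) (N : ι → ℝ) : Prop where
  integrableOn : ∀ i, IntegrableOn (φ i) (Ioi 0)
  isBigO : (fun i => ∫ ψ in Ioi 0, φ i ψ) =O[⊤] N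

/-- Uniform weighted square integrability of a family of continuous functions on `𝕋_L × ℝ₊`:
`‖⟨ψ⟩^m (h i)‖²_{L²} = O(N i)`, with one constant for all `i`. -/
structure L2BigO {ι : Type*} (L : ℝ) (m : ℕ) (h : ι → ℝ → ℝ → ℝ) (N : ι → ℝ) : Prop where
  continuous : ∀ i, Continuous (uncurry (h i))
  finite : ∀ i, FiniteL2 L (wt m (h i))
  isBigO : (fun i => L2sq L (wt m (h i))) =O[⊤] N

variable {ι : Type*} {L : ℝ} {m n : ℕ} {N : ι → ℝ} {φ ξ : ι → ℝ → ℝ} {f g h : ι → ℝ → ℝ → ℝ}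

theorem wt_zero (h : ℝ → ℝ → ℝ) : wt 0 h = h := by
  ext; simp [wt]

theorem wt_wt (m n : ℕ) (h : ℝ → ℝ → ℝ) : wt m (wt n h) = wt (m + n) h := by
  ext; simp only [wt, pow_add, mul_assoc]

theorem continuous_wt (m : ℕ) {h : ℝ → ℝ → ℝ} (hh : Continuous (uncurry h)) :
    Continuous (uncurry (wt m h)) :=
  Continuous.mul (by fun_prop : Continuous fun p : ℝ × ℝ => (1 + p.2) ^ m) hh

theorem sliceSq_wt (L : ℝ) (m : ℕ) (h : ℝ → ℝ → ℝ) (ψ : ℝ) :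
    sliceSq L (wt m h) ψ = (1 + ψ) ^ (2 * m) * sliceSq L h ψ := by
  simp only [sliceSq, wt, mul_pow, intervalIntegral.integral_const_mul, pow_mul']

/-- The Cauchy–Schwarz inequality, from the discriminant of `x ↦ ∫ (x f + g)²`. -/
theorem sq_integral_mul_le {α : Type*} [MeasurableSpace α] {μ : Measure α} {f g : α → ℝ}
    (hf : Integrable (fun x => f x ^ 2) μ) (hg : Integrable (fun x => g x ^ 2) μ) :
    (∫ x, f x * g x ∂μ) ^ 2 ≤ (∫ x, f x ^ 2 ∂μ) * ∫ x, g x ^ 2 ∂μ := by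
  by_cases hfg : Integrable (fun x => f x * g x) μ
  swap
  · rw [integral_undef hfg, zero_pow two_ne_zero]
    exact mul_nonneg (integral_nonneg fun _ => sq_nonneg _) (integral_nonneg fun _ => sq_nonneg _)
  have hquad (t : ℝ) : 0 ≤ (∫ x, f x ^ 2 ∂μ) * (t * t) + 2 * (∫ x, f x * g x ∂μ) * t
      + ∫ x, g x ^ 2 ∂μ := by
    calc 0 ≤ ∫ x, (t * f x + g x) ^ 2 ∂μ := integral_nonneg fun _ => sq_nonneg _
      _ = ∫ x, t ^ 2 * f x ^ 2 + 2 * t * (f x * g x) + g x ^ 2 ∂μ := by congr! 2; ring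
      _ = _ := by
        have hadd := (hf.const_mul (t ^ 2)).add (hfg.const_mul (2 * t))
        rw [integral_add (f := fun x => t ^ 2 * f x ^ 2 + 2 * t * (f x * g x)) hadd hg,
          integral_add (hf.const_mul _) (hfg.const_mul _), integral_const_mul, integral_const_mul]
        ring
  have hdiscrim := discrim_le_zero hquad
  rw [discrim] at hdiscrim
  linarith

theorem FiniteL2.l2BigO {h : ℝ → ℝ → ℝ} (hh : FiniteL2 L (wt m h)) (hc : Continuous (uncurry h)) :
    L2BigO L m (fun _ : Unit => h) fun _ => 1 :=
  ⟨fun _ => hc, fun _ => hh, .of_bound ‖L2sq L (wt m h)‖ (by simp)⟩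

namespace L1BigO

theorem add (hφ : L1BigO φ N) (hξ : L1BigO ξ N) : L1BigO (fun i ψ => φ i ψ + ξ i ψ) N where
  integrableOn i := (hφ.integrableOn i).add (hξ.integrableOn i)
  isBigO := by
    simpa only [integral_add (hφ.integrableOn _) (hξ.integrableOn _)] using hφ.isBigO.add hξ.isBigO

theorem const_mul (hφ : L1BigO φ N) (c : ℝ) : L1BigO (fun i ψ => c * φ i ψ) N where
  integrableOn i := (hφ.integrableOn i).const_mul c
  isBigO := by simpa only [integral_const_mul] using hφ.isBigO.const_mul_left c

theorem of_mul {φ : ℝ → ℝ} {β : ι → ℝ} (hφ : IntegrableOn φ (Ioi 0)) (hβ : β =O[⊤] N) :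
    L1BigO (fun i ψ => β i * φ ψ) N where
  integrableOn i := hφ.const_mul (β i)
  isBigO := (hβ.const_mul_left (∫ ψ in Ioi 0, φ ψ)).congr_left fun i => by
    rw [integral_const_mul, mul_comm]

end L1BigO

namespace L2BigO

theorem wt_iff (hc : ∀ i, Continuous (uncurry (h i))) :
    L2BigO L m (fun i => wt n (h i)) N ↔ L2BigO L (m + n) h N := by
  have hcn (i : ι) := continuous_wt n (hc i)
  constructor <;> rintro ⟨_, hfin, hO⟩
  · exact ⟨hc, by simpa only [wt_wt] using hfin, by simpa only [wt_wt] using hO⟩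
  · exact ⟨hcn, by simpa only [wt_wt] using hfin, by simpa only [wt_wt] using hO⟩

protected theorem zero : L2BigO L m (fun _ _ _ => 0) N := by
  have hzero : wt m (fun _ _ => 0) = fun _ _ => 0 := by ext; simp [wt]
  exact ⟨fun _ => continuous_const, by simp [hzero, FiniteL2],
    by simpa [hzero, L2sq] using isBigO_zero (E' := ℝ) N ⊤⟩

variable [hL : Fact (0 < L)]

theorem l1BigO (hh : L2BigO L m h N) :
    L1BigO (fun i ψ => (1 + ψ) ^ (2 * m) * sliceSq L (h i) ψ) N where
  integrableOn i := by
    simpa only [← sliceSq_wt] using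
      (finiteL2_iff (continuous_wt m (hh.continuous i))).1 (hh.finite i)
  isBigO := by simpa only [(hh.finite _).L2sq_eq, sliceSq_wt] using hh.isBigO

theorem l1BigO_sq {u : ι → ℝ → ℝ} (hu : L2BigO L m (fun i _ => u i) N) :
    L1BigO (fun i ψ => (1 + ψ) ^ (2 * m) * u i ψ ^ 2) N := by
  simpa only [sliceSq_const, mul_left_comm _ L, mul_inv_cancel_left₀ hL.out.ne']
    using hu.l1BigO.const_mul L⁻¹

theorem of_sliceSq_le (hc : ∀ i, Continuous (uncurry (h i))) (hφ : L1BigO φ N)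
    (hle : ∀ i, ∀ ψ > 0, (1 + ψ) ^ (2 * m) * sliceSq L (h i) ψ ≤ φ i ψ) : L2BigO L m h N := by
  have hle (i : ι) (ψ : ℝ) (hψ : ψ ∈ Ioi 0) : sliceSq L (wt m (h i)) ψ ≤ φ i ψ :=
    sliceSq_wt L m (h i) ψ ▸ hle i ψ hψ
  have hint (i : ι) : IntegrableOn (sliceSq L (wt m (h i))) (Ioi 0) := by
    refine (hφ.integrableOn i).mono'
      (continuous_sliceSq L (continuous_wt m (hc i))).aestronglyMeasurable ?_
    filter_upwards [ae_restrict_mem measurableSet_Ioi] with ψ hψ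
    rw [Real.norm_of_nonneg (sliceSq_nonneg _ _)]
    exact hle i ψ hψ
  have hfin (i : ι) : FiniteL2 L (wt m (h i)) := (finiteL2_iff (continuous_wt m (hc i))).2 (hint i)
  refine ⟨hc, hfin, .trans (.of_bound 1 (eventually_top.2 fun i => ?_)) hφ.isBigO⟩
  rw [one_mul, Real.norm_of_nonneg (L2sq_nonneg L _), (hfin i).L2sq_eq]
  exact (setIntegral_mono_on (hint i) (hφ.integrableOn i) measurableSet_Ioi (hle i)).trans
    (le_abs_self _)

theorem of_intervalIntegral_le (hc : ∀ i, Continuous (uncurry (h i))) {K : ι → ℝ}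
    (hK : K =O[⊤] N) {u : ι → ℝ → ℝ} (hu : ∀ i, Tendsto (u i) atTop (nhds 0))
    (hle : ∀ i, ∀ᶠ R in atTop, ∫ ψ in (0 : ℝ)..R, sliceSq L (h i) ψ ≤ K i + u i R) :
    L2BigO L 0 h N := by
  have hint (i : ι) : IntegrableOn (sliceSq L (h i)) (Ioi 0) := by
    refine integrableOn_Ioi_of_intervalIntegral_norm_bounded (K i + 1) 0
      (fun R => (continuous_sliceSq L (hc i)).integrableOn_Ioc) tendsto_id ?_
    filter_upwards [hle i, (hu i).eventually_le_const one_pos] with R hR huR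
    simp only [Real.norm_of_nonneg (sliceSq_nonneg _ _), id]
    linarith
  have hfin (i : ι) : FiniteL2 L (h i) := (finiteL2_iff (hc i)).2 (hint i)
  refine ⟨hc, by simpa only [wt_zero] using hfin,
    .trans (.of_bound 1 (eventually_top.2 fun i => ?_)) hK⟩
  rw [one_mul, Real.norm_of_nonneg (L2sq_nonneg L _), wt_zero, (hfin i).L2sq_eq]
  have hlim : Tendsto (fun R => K i + u i R) atTop (nhds (K i)) := by
    simpa using (hu i).const_add (K i)
  exact (le_of_tendsto_of_tendsto (intervalIntegral_tendsto_integral_Ioi 0 (hint i) tendsto_id)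
    hlim (hle i)).trans (le_abs_self _)

theorem of_sq_le (hf : L2BigO L m f N) (hc : ∀ i, Continuous (uncurry (h i))) (c : ℝ)
    (hle : ∀ i s, ∀ ψ > 0, h i s ψ ^ 2 ≤ c * f i s ψ ^ 2) : L2BigO L m h N := by
  refine of_sliceSq_le hc (hf.l1BigO.const_mul c) fun i ψ hψ => ?_
  rw [mul_left_comm]
  gcongr
  rw [sliceSq, sliceSq, ← intervalIntegral.integral_const_mul]
  exact integral_mono_of_continuous ((continuous_slice (hc i) ψ).pow 2)
    (((continuous_slice (hf.continuous i) ψ).pow 2).const_mul c) fun s => hle i s ψ hψ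

theorem congr (hf : L2BigO L m f N) (hc : ∀ i, Continuous (uncurry (h i)))
    (heq : ∀ i s, ∀ ψ > 0, h i s ψ = f i s ψ) : L2BigO L m h N :=
  hf.of_sq_le hc 1 fun i s ψ hψ => by rw [heq i s ψ hψ, one_mul]

theorem of_sq_le_mul (hc : ∀ i, Continuous (uncurry (h i))) {β : ι → ℝ → ℝ}
    (hβ : ∀ i, Continuous (β i)) (hβN : (fun i => ∫ s in (0 : ℝ)..L, β i s) =O[⊤] N) {φ : ℝ → ℝ}
    (hφ : IntegrableOn (fun ψ => (1 + ψ) ^ (2 * m) * φ ψ) (Ioi 0))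
    (hle : ∀ i s, ∀ ψ > 0, h i s ψ ^ 2 ≤ β i s * φ ψ) : L2BigO L m h N := by
  refine of_sliceSq_le hc (.of_mul hφ hβN) fun i ψ hψ => ?_
  rw [mul_left_comm]
  gcongr
  rw [sliceSq, ← intervalIntegral.integral_mul_const]
  exact integral_mono_of_continuous ((continuous_slice (hc i) ψ).pow 2) ((hβ i).mul_const _)
    fun s => hle i s ψ hψ

theorem add (hf : L2BigO L m f N) (hg : L2BigO L m g N) :
    L2BigO L m (fun i s ψ => f i s ψ + g i s ψ) N := by
  refine of_sliceSq_le (fun i => (hf.continuous i).add (hg.continuous i))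
    ((hf.l1BigO.add hg.l1BigO).const_mul 2) fun i ψ hψ => ?_
  rw [← mul_add, mul_left_comm]
  gcongr
  exact sliceSq_add_le (hf.continuous i) (hg.continuous i) ψ

theorem periodic_mul (hf : L2BigO L m f N) {a : ℝ → ℝ} (ha : Continuous a)
    (hap : Periodic a L) : L2BigO L m (fun i s ψ => a s * f i s ψ) N := by
  obtain ⟨C, hC⟩ := isBounded_iff_forall_norm_le.1 (hap.isBounded_of_continuous hL.out.ne' ha)
  refine hf.of_sq_le (fun i => (ha.comp continuous_fst).mul (hf.continuous i)) (C ^ 2)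
    fun i s ψ _ => ?_
  rw [mul_pow, ← sq_abs (a s)]
  gcongr
  exact hC _ (mem_range_self s)

theorem const_mul (hf : L2BigO L m f N) (c : ℝ) : L2BigO L m (fun i s ψ => c * f i s ψ) N :=
  hf.periodic_mul continuous_const fun _ => rfl

theorem sub (hf : L2BigO L m f N) (hg : L2BigO L m g N) :
    L2BigO L m (fun i s ψ => f i s ψ - g i s ψ) N := by
  simpa only [neg_one_mul, ← sub_eq_add_neg] using hf.add (hg.const_mul (-1))

theorem sum {J : Finset ℕ} {f : ℕ → ι → ℝ → ℝ → ℝ} (hf : ∀ j ∈ J, L2BigO L m (f j) N) :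
    L2BigO L m (fun i s ψ => ∑ j ∈ J, f j i s ψ) N := by
  induction J using Finset.cons_induction with
  | empty => exact .zero
  | cons j J hj ih =>
    simp only [Finset.sum_cons]
    exact (hf j (J.mem_cons_self j)).add (ih fun i hi => hf i (Finset.mem_cons_of_mem hi))

theorem mono_weight (hf : L2BigO L n f N) (hmn : m ≤ n) : L2BigO L m f N := by
  refine of_sliceSq_le hf.continuous hf.l1BigO fun i ψ hψ => ?_
  gcongr
  · exact sliceSq_nonneg _ _
  · linarith

/-- By Cauchy–Schwarz on each slice. -/
protected theorem sliceMean (hf : L2BigO L m f N) {ρ : ℝ → ℝ} (hρ : Continuous ρ) :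
    L2BigO L m (fun i _ => sliceMean L ρ (f i)) N := by
  refine of_sliceSq_le (fun i => (continuous_sliceMean L hρ (hf.continuous i)).comp continuous_snd)
    (hf.l1BigO.const_mul (L * ∫ s in (0 : ℝ)..L, ρ s ^ 2)) fun i ψ hψ => ?_
  rw [mul_left_comm]
  gcongr
  have hcs := sq_integral_mul_le (μ := volume.restrict (Ioc 0 L)) (f := ρ) (g := (f i · ψ))
    ((hρ.pow 2).integrableOn_Ioc)
    (((continuous_slice (hf.continuous i) ψ).pow 2).integrableOn_Ioc)
  simp only [← intervalIntegral.integral_of_le hL.out.le] at hcs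
  simp only [sliceSq, intervalIntegral.integral_const, sub_zero, smul_eq_mul, mul_assoc]
  exact mul_le_mul_of_nonneg_left hcs hL.out.le

end L2BigO

theorem FiniteL2.mono_weight [Fact (0 < L)] {h : ℝ → ℝ → ℝ} (hh : FiniteL2 L (wt n h))
    (hc : Continuous (uncurry h)) (hmn : m ≤ n) : FiniteL2 L (wt m h) :=
  ((hh.l2BigO hc).mono_weight hmn).finite ()

end UniformBounds

/-! ### Poincaré and Hardy inequalities -/

section Inequalities

open Asymptotics

variable {ι : Type*} {L : ℝ} {m : ℕ} {N : ι → ℝ} {u u' ρ : ℝ → ℝ} [hL : Fact (0 < L)]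

theorem sq_sub_le_mul_integral_sq_deriv (hu : ∀ s, HasDerivAt u (u' s) s) (hu' : Continuous u')
    {s t : ℝ} (hs : s ∈ Icc 0 L) (ht : t ∈ Icc 0 L) :
    (u s - u t) ^ 2 ≤ L * ∫ r in (0 : ℝ)..L, u' r ^ 2 := by
  have habs : |u s - u t| ≤ ∫ r in Ioc 0 L, 1 * |u' r| := by
    rw [← intervalIntegral.integral_eq_sub_of_hasDerivAt (fun r _ => hu r)
      (hu'.intervalIntegrable t s), ← Real.norm_eq_abs]
    refine (intervalIntegral.norm_integral_le_integral_norm_uIoc (μ := volume)).trans ?_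
    simp only [one_mul, Real.norm_eq_abs]
    exact setIntegral_mono_set hu'.abs.integrableOn_Ioc (.of_forall fun _ => abs_nonneg _)
      (Ioc_subset_Ioc (le_inf ht.1 hs.1) (sup_le ht.2 hs.2)).eventuallyLE
  have hcs := sq_integral_mul_le (μ := volume.restrict (Ioc 0 L)) (f := fun _ => 1)
    (g := fun r => |u' r|) (by simp) (by simpa using (hu'.fun_pow 2).integrableOn_Ioc.integrable)
  calc (u s - u t) ^ 2 = |u s - u t| ^ 2 := (sq_abs _).symm
    _ ≤ _ := pow_le_pow_left₀ (abs_nonneg _) habs 2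
    _ ≤ _ := hcs
    _ = _ := by simp [intervalIntegral.integral_of_le hL.out.le, hL.out.le]

theorem integral_sq_le_of_integral_mul (hu : ∀ s, HasDerivAt u (u' s) s) (hu' : Continuous u')
    (hρ : Continuous ρ) (hM : ∫ s in (0 : ℝ)..L, ρ s ≠ 0) :
    ∫ s in (0 : ℝ)..L, u s ^ 2 ≤ 2 * (∫ s in (0 : ℝ)..L, ρ s)⁻¹ ^ 2
      * (L * (∫ s in (0 : ℝ)..L, ρ s * u s) ^ 2
        + (L * ∫ s in (0 : ℝ)..L, |ρ s|) ^ 2 * ∫ s in (0 : ℝ)..L, u' s ^ 2) := by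
  have huc : Continuous u := continuous_iff_continuousAt.2 fun s => (hu s).continuousAt
  set M := ∫ s in (0 : ℝ)..L, ρ s
  set A := ∫ s in (0 : ℝ)..L, ρ s * u s
  set W := ∫ s in (0 : ℝ)..L, |ρ s|
  set D := ∫ s in (0 : ℝ)..L, u' s ^ 2
  have hdev {s : ℝ} (hs : s ∈ Icc 0 L) : (M * u s - A) ^ 2 ≤ W ^ 2 * (L * D) := by
    have hle {t : ℝ} (ht : t ∈ Icc 0 L) : |ρ t * (u s - u t)| ≤ |ρ t| * √(L * D) := by
      rw [abs_mul]
      gcongr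
      exact Real.abs_le_sqrt (sq_sub_le_mul_integral_sq_deriv hu hu' hs ht)
    have hMA : M * u s - A = ∫ t in (0 : ℝ)..L, ρ t * (u s - u t) := by
      simp only [mul_sub]
      rw [intervalIntegral.integral_sub ((hρ.mul_const _).intervalIntegrable 0 L)
        ((hρ.fun_mul huc).intervalIntegrable 0 L), intervalIntegral.integral_mul_const]
    have habs : |M * u s - A| ≤ W * √(L * D) := by
      rw [hMA, ← intervalIntegral.integral_mul_const]
      exact (intervalIntegral.abs_integral_le_integral_abs hL.out.le).trans
        (intervalIntegral.integral_mono_on hL.out.le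
          ((hρ.mul (continuous_const.sub huc)).abs.intervalIntegrable 0 L)
          ((hρ.abs.mul_const _).intervalIntegrable 0 L) fun t ht => hle ht)
    have hLD : 0 ≤ L * D := (sq_nonneg _).trans (sq_sub_le_mul_integral_sq_deriv hu hu' hs hs)
    calc (M * u s - A) ^ 2 = |M * u s - A| ^ 2 := (sq_abs _).symm
      _ ≤ (W * √(L * D)) ^ 2 := pow_le_pow_left₀ (abs_nonneg _) habs 2
      _ = W ^ 2 * (L * D) := by rw [mul_pow, Real.sq_sqrt hLD]
  have hpoint : ∀ s ∈ Icc 0 L, u s ^ 2 ≤ 2 * M⁻¹ ^ 2 * (A ^ 2 + W ^ 2 * (L * D)) := fun s hs =>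
    calc u s ^ 2 = M⁻¹ ^ 2 * (A + (M * u s - A)) ^ 2 := by field_simp; ring
      _ ≤ M⁻¹ ^ 2 * (2 * (A ^ 2 + (M * u s - A) ^ 2)) := by gcongr; exact add_sq_le
      _ ≤ M⁻¹ ^ 2 * (2 * (A ^ 2 + W ^ 2 * (L * D))) := by gcongr; exact hdev hs
      _ = _ := by ring
  refine (intervalIntegral.integral_mono_on hL.out.le ((huc.pow 2).intervalIntegrable 0 L)
    intervalIntegrable_const hpoint).trans_eq ?_
  simp only [intervalIntegral.integral_const, sub_zero, smul_eq_mul]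
  ring

theorem L2BigO.of_dS_one {h : ι → ℝ → ℝ → ℝ} (hh : ∀ i, Smooth2 (h i))
    (hd : L2BigO L m (fun i => dS 1 (h i)) N) (hρ : Continuous ρ)
    (hM : ∫ s in (0 : ℝ)..L, ρ s ≠ 0) (hmean : L2BigO L m (fun i _ => sliceMean L ρ (h i)) N) :
    L2BigO L m h N := by
  refine .of_sliceSq_le (fun i => (hh i).continuous)
    ((hmean.l1BigO.add (hd.l1BigO.const_mul ((L * ∫ s in (0 : ℝ)..L, |ρ s|) ^ 2))).const_mul
      (2 * (∫ s in (0 : ℝ)..L, ρ s)⁻¹ ^ 2)) fun i ψ hψ => ?_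
  have hslice := integral_sq_le_of_integral_mul ((hh i).hasDerivAt_left · ψ)
    (((hh i).dS 1).contDiff_left ψ).continuous hρ hM
  calc _ ≤ (1 + ψ) ^ (2 * m) * _ := mul_le_mul_of_nonneg_left hslice (by positivity)
    _ = _ := by rw [sliceSq_const]; simp only [sliceSq, sliceMean]; ring

theorem integrableOn_of_sq_mul {v : ℝ → ℝ} {x : ℝ} (hx : 0 ≤ x) (hv : Continuous v)
    (hint : IntegrableOn (fun t => ((1 + t) * v t) ^ 2) (Ioi x)) : IntegrableOn v (Ioi x) := by
  refine (integrable_inv_one_add_sq.integrableOn.add hint).mono' hv.aestronglyMeasurable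
    ((ae_restrict_mem measurableSet_Ioi).mono fun t (ht : x < t) => ?_)
  have hle : (1 + t)⁻¹ ^ 2 ≤ (1 + t ^ 2)⁻¹ := by
    rw [inv_pow]
    gcongr
    nlinarith
  have hprod : |v t| = |(1 + t)⁻¹| * |(1 + t) * v t| := by
    rw [← abs_mul, inv_mul_cancel_left₀ (by linarith)]
  rw [Real.norm_eq_abs, Pi.add_apply, hprod]
  nlinarith [two_mul_le_add_sq |(1 + t)⁻¹| |(1 + t) * v t|, sq_abs (1 + t)⁻¹,
    sq_abs ((1 + t) * v t), abs_nonneg (1 + t)⁻¹, abs_nonneg ((1 + t) * v t)]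

/-- Cauchy–Schwarz for `u(x) = -∫_x^∞ (1 + t)⁻¹ · (1 + t) u'(t) dt`. -/
theorem sq_le_integral_Ioi_of_tendsto_zero {x : ℝ} (hx : 0 < x) (hu' : Continuous u')
    (hderiv : ∀ t > 0, HasDerivAt u (u' t) t) (hlim : Tendsto u atTop (nhds 0))
    (hint : IntegrableOn (fun t => ((1 + t) * u' t) ^ 2) (Ioi x)) :
    u x ^ 2 ≤ Real.pi * ∫ t in Ioi x, ((1 + t) * u' t) ^ 2 := by
  have hpos : ∀ t ∈ Ioi x, 0 < t := fun t ht => hx.trans ht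
  have hle : ∀ t ∈ Ioi x, (1 + t)⁻¹ ^ 2 ≤ (1 + t ^ 2)⁻¹ := fun t ht => by
    rw [inv_pow]
    gcongr
    linarith [hpos t ht, add_sq 1 t]
  have hinv : IntegrableOn (fun t : ℝ => (1 + t)⁻¹ ^ 2) (Ioi x) :=
    integrable_inv_one_add_sq.integrableOn.mono' (by fun_prop)
      ((ae_restrict_mem measurableSet_Ioi).mono fun t ht =>
        (Real.norm_of_nonneg (sq_nonneg _)).trans_le (hle t ht))
  have hprod : ∀ t ∈ Ioi x, (1 + t)⁻¹ * ((1 + t) * u' t) = u' t := fun t ht =>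
    inv_mul_cancel_left₀ (by linarith [hpos t ht]) _
  have hux : ∫ t in Ioi x, (1 + t)⁻¹ * ((1 + t) * u' t) = -u x := by
    rw [setIntegral_congr_fun measurableSet_Ioi hprod, integral_Ioi_of_hasDerivAt_of_tendsto
      (hderiv x hx).continuousAt.continuousWithinAt (fun t ht => hderiv t (hpos t ht))
      (integrableOn_of_sq_mul hx.le hu' hint) hlim,
      zero_sub]
  have hpi : ∫ t in Ioi x, (1 + t)⁻¹ ^ 2 ≤ Real.pi :=
    (setIntegral_mono_on hinv integrable_inv_one_add_sq.integrableOn measurableSet_Ioi hle).trans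
      ((setIntegral_le_integral integrable_inv_one_add_sq
        (.of_forall fun t => by positivity)).trans_eq integral_univ_inv_one_add_sq)
  calc u x ^ 2 = (∫ t in Ioi x, (1 + t)⁻¹ * ((1 + t) * u' t)) ^ 2 := by rw [hux, neg_sq]
    _ ≤ _ := sq_integral_mul_le hinv hint
    _ ≤ _ := mul_le_mul_of_nonneg_right hpi (integral_nonneg fun _ => sq_nonneg _)

theorem pow_mul_sq_le_of_tendsto_zero {x : ℝ} (hx : 0 < x) (hu' : Continuous u')
    (hderiv : ∀ t > 0, HasDerivAt u (u' t) t) (hlim : Tendsto u atTop (nhds 0))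
    (hint : IntegrableOn (fun t => (1 + t) ^ (2 * (m + 2)) * u' t ^ 2) (Ioi 0)) :
    (1 + x) ^ (2 * m) * u x ^ 2
      ≤ Real.pi * (∫ t in Ioi 0, (1 + t) ^ (2 * (m + 2)) * u' t ^ 2) * (1 + x ^ 2)⁻¹ := by
  have hsub : Ioi x ⊆ Ioi 0 := Ioi_subset_Ioi hx.le
  have hle : ∀ t ∈ Ioi x, (1 + x) ^ (2 * m) * (1 + x ^ 2) * ((1 + t) * u' t) ^ 2
      ≤ (1 + t) ^ (2 * (m + 2)) * u' t ^ 2 := fun t ht => by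
    have hxt : x < t := ht
    calc _ ≤ (1 + t) ^ (2 * m) * (1 + t) ^ 2 * ((1 + t) * u' t) ^ 2 := by
          have ht0 : 0 < 1 + t := by linarith
          gcongr
          nlinarith
      _ = _ := by ring
  have hpos : 0 < (1 + x) ^ (2 * m) * (1 + x ^ 2) := by positivity
  have hint_x : IntegrableOn (fun t => ((1 + t) * u' t) ^ 2) (Ioi x) := by
    refine ((hint.mono_set hsub).const_mul ((1 + x) ^ (2 * m) * (1 + x ^ 2))⁻¹).mono'
      (by fun_prop) ((ae_restrict_mem measurableSet_Ioi).mono fun t ht => ?_)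
    rw [Real.norm_of_nonneg (sq_nonneg _), ← div_eq_inv_mul, le_div_iff₀' hpos]
    exact hle t ht
  have hmono : (1 + x) ^ (2 * m) * (1 + x ^ 2) * ∫ t in Ioi x, ((1 + t) * u' t) ^ 2
      ≤ ∫ t in Ioi 0, (1 + t) ^ (2 * (m + 2)) * u' t ^ 2 := by
    rw [← integral_const_mul]
    refine (setIntegral_mono_on (hint_x.const_mul _) (hint.mono_set hsub) measurableSet_Ioi
      hle).trans (setIntegral_mono_set hint ?_ hsub.eventuallyLE)
    filter_upwards [ae_restrict_mem measurableSet_Ioi] with t (ht : 0 < t)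
    positivity
  rw [← div_eq_mul_inv, le_div_iff₀ (by positivity)]
  calc _ = (1 + x) ^ (2 * m) * (1 + x ^ 2) * u x ^ 2 := by ring
    _ ≤ (1 + x) ^ (2 * m) * (1 + x ^ 2) * (Real.pi * ∫ t in Ioi x, ((1 + t) * u' t) ^ 2) := by
      gcongr
      exact sq_le_integral_Ioi_of_tendsto_zero hx hu' hderiv hlim hint_x
    _ = Real.pi * ((1 + x) ^ (2 * m) * (1 + x ^ 2) * ∫ t in Ioi x, ((1 + t) * u' t) ^ 2) := by ring
    _ ≤ _ := by gcongr

theorem eq_zero_of_tendsto_of_hasDerivAt {l c : ℝ} (hderiv : ∀ t, HasDerivAt u (u' t) t)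
    (hu : Tendsto u atTop (nhds l)) (hu' : Tendsto u' atTop (nhds c)) : c = 0 := by
  choose ξ hξ hslope using fun x : ℝ => exists_hasDerivAt_eq_slope u u' (lt_add_one x)
    (fun t _ => (hderiv t).continuousAt.continuousWithinAt) fun t _ => hderiv t
  have hξ_top : Tendsto ξ atTop atTop := tendsto_atTop_mono (fun x => (hξ x).1.le) tendsto_id
  have hdiff : Tendsto (fun x => u (x + 1) - u x) atTop (nhds (l - l)) :=
    (hu.comp (tendsto_atTop_add_const_right atTop 1 tendsto_id)).sub hu
  refine tendsto_nhds_unique (hu'.comp hξ_top) ?_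
  simpa only [comp_def, hslope, add_sub_cancel_left, div_one, sub_self] using hdiff

theorem L2BigO.of_hasDerivAt {u u' : ι → ℝ → ℝ} (hu : ∀ i, Continuous (u i))
    (hu' : ∀ i, ∀ ψ > 0, HasDerivAt (u i) (u' i ψ) ψ) (hlim : ∀ i, Tendsto (u i) atTop (nhds 0))
    (hd : L2BigO L (m + 2) (fun i _ => u' i) N) : L2BigO L m (fun i _ => u i) N := by
  have hint := hd.l1BigO_sq
  refine .of_sliceSq_le (fun i => (hu i).comp continuous_snd)
    (.of_mul integrable_inv_one_add_sq.integrableOn (hint.isBigO.const_mul_left (L * Real.pi)))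
    fun i ψ hψ => ?_
  rw [sliceSq_const, mul_left_comm, mul_assoc L, mul_assoc L]
  exact mul_le_mul_of_nonneg_left (pow_mul_sq_le_of_tendsto_zero hψ
    (continuous_slice (h := fun ψ _ => u' i ψ) ((hd.continuous i).comp continuous_swap) 0)
    (hu' i) (hlim i) (hint.integrableOn i)) hL.out.le

end Inequalities

/-! ### The energy estimate -/

section Energy

open Asymptotics

variable {ι : Type*} {L q r : ℝ} {N : ι → ℝ} {κ : ℝ → ℝ} {f g h P : ℝ → ℝ → ℝ}

/-- The heat operator `∂_s - κ(s) ∂_ψ²`, in which the tangential variable plays the role of time. -/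
noncomputable def heat (κ : ℝ → ℝ) (P : ℝ → ℝ → ℝ) : ℝ → ℝ → ℝ :=
  fun s ψ => dS 1 P s ψ - κ s * dPsi 2 P s ψ

/-- The `L²(𝕋_L)` inner product of the slices of `f` and `g` at height `ψ`. -/
noncomputable def sliceInner (L : ℝ) (f g : ℝ → ℝ → ℝ) (ψ : ℝ) : ℝ :=
  ∫ s in (0 : ℝ)..L, f s ψ * g s ψ

/-- The growth condition `∫_0^R ‖P(·, ψ)‖² dψ = O(R²)` excluding the nonuniqueness of the
homogeneous problem. -/
def QuadraticGrowth (L : ℝ) (P : ℝ → ℝ → ℝ) : Prop :=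
  (fun R => ∫ ψ in (0 : ℝ)..R, sliceSq L P ψ) =O[atTop] fun R => R ^ 2

theorem continuous_heat (hκ : Continuous κ) (hP : Smooth2 P) : Continuous (uncurry (heat κ P)) :=
  (hP.dS 1).continuous.sub ((hκ.comp continuous_fst).mul (hP.dPsi 2).continuous)

theorem continuous_sliceInner (L : ℝ) (hf : Continuous (uncurry f)) (hg : Continuous (uncurry g)) :
    Continuous (sliceInner L f g) :=
  continuous_integral_slice L (h := fun s ψ => f s ψ * g s ψ) (hf.mul hg)

theorem hasDerivAt_sliceInner (hf : Smooth2 f) (hg : Smooth2 g) (ψ : ℝ) :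
    HasDerivAt (sliceInner L f g)
      (sliceInner L (dPsi 1 f) g ψ + sliceInner L f (dPsi 1 g) ψ) ψ := by
  have hfg : Smooth2 fun s ψ => f s ψ * g s ψ := ContDiff.mul hf hg
  refine (hfg.hasDerivAt_integral L ψ).congr_deriv ?_
  rw [sliceInner, sliceInner, ← intervalIntegral.integral_add]
  · exact intervalIntegral.integral_congr fun s _ => dPsi_one_eq (h := fun s ψ => f s ψ * g s ψ)
      ((hf.hasDerivAt_right s ψ).mul (hg.hasDerivAt_right s ψ))
  all_goals refine Continuous.intervalIntegrable ?_ 0 L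
  exacts [(continuous_slice (hf.dPsi 1).continuous ψ).mul (continuous_slice hg.continuous ψ),
    (continuous_slice hf.continuous ψ).mul (continuous_slice (hg.dPsi 1).continuous ψ)]

theorem sliceInner_dS_one_self (hP : Smooth2 P) (hp : PeriodicS L P) (ψ : ℝ) :
    sliceInner L (dS 1 P) P ψ = 0 := by
  have hsq : Smooth2 fun s ψ => P s ψ ^ 2 := ContDiff.pow hP 2
  have hzero := integral_dS_one_eq_zero hsq (fun ψ s => by simp only [hp ψ s]) ψ (L := L)
  have hderiv (s : ℝ) : dS 1 (fun s ψ => P s ψ ^ 2) s ψ = 2 * (dS 1 P s ψ * P s ψ) := by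
    rw [dS_one_eq ((hP.hasDerivAt_left s ψ).pow 2)]
    ring
  simpa only [sliceInner, hderiv, intervalIntegral.integral_const_mul, mul_eq_zero, two_ne_zero,
    false_or] using hzero

/-- The mixed term `∫ ∂_s∂_ψP · ∂_ψP` vanishes by periodicity. -/
theorem hasDerivAt_sliceInner_dS_one_dPsi_one (hP : Smooth2 P) (hp : PeriodicS L P) (ψ : ℝ) :
    HasDerivAt (sliceInner L (dS 1 P) (dPsi 1 P)) (sliceInner L (dS 1 P) (dPsi 2 P) ψ) ψ := by
  simpa only [dPsi_dPsi, Nat.reduceAdd, ← hP.dS_one_dPsi_one,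
    sliceInner_dS_one_self (hP.dPsi 1) (hp.dPsi 1), zero_add]
    using hasDerivAt_sliceInner (L := L) (hP.dS 1) (hP.dPsi 1) ψ

theorem hasDerivAt_sliceInner_dPsi_one (hP : Smooth2 P) (ψ : ℝ) :
    HasDerivAt (sliceInner L P (dPsi 1 P))
      (sliceSq L (dPsi 1 P) ψ + sliceInner L P (dPsi 2 P) ψ) ψ := by
  simpa only [dPsi_dPsi, Nat.reduceAdd, sliceSq, sliceInner, sq]
    using hasDerivAt_sliceInner (L := L) hP (hP.dPsi 1) ψ

/-- The boundary terms produced by the cutoff `(1 - rψ)⁴` in the energy estimate. With the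
constant 96, the second term gains `72 q²r² (1 - rψ)² ‖∂_ψP‖²`, which absorbs the loss
`64 q²r² (1 - rψ)² ‖∂_ψP‖²` caused by differentiating the cutoff in the first. -/
noncomputable def energyFlux (L q r : ℝ) (P : ℝ → ℝ → ℝ) (ψ : ℝ) : ℝ :=
  2 * q * ((1 - r * ψ) ^ 4 * sliceInner L (dS 1 P) (dPsi 1 P) ψ)
    + 96 * q ^ 2 * r ^ 2 * ((1 - r * ψ) ^ 2 * sliceInner L P (dPsi 1 P) ψ)

theorem energyFlux_zero (hP0 : ∀ s, P s 0 = 0) : energyFlux L q r P 0 = 0 := by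
  have hdS (s : ℝ) : dS 1 P s 0 = 0 := by simp [dS, hP0]
  simp [energyFlux, sliceInner, hP0, hdS]

theorem energyFlux_inv (hr : r ≠ 0) : energyFlux L q r P r⁻¹ = 0 := by
  simp [energyFlux, hr]

theorem hasDerivAt_cutoff_pow_mul {u : ℝ → ℝ} {u' ψ : ℝ} (hu : HasDerivAt u u' ψ) (r : ℝ) (n : ℕ) :
    HasDerivAt (fun ψ => (1 - r * ψ) ^ n * u ψ)
      ((1 - r * ψ) ^ n * u' - n * r * (1 - r * ψ) ^ (n - 1) * u ψ) ψ := by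
  refine (((((hasDerivAt_id' ψ).const_mul r).const_sub 1).fun_pow n).fun_mul hu).congr_deriv ?_
  ring

theorem QuadraticGrowth.tendsto_inv_pow_four_mul (hP : QuadraticGrowth L P) :
    Tendsto (fun R : ℝ => R⁻¹ ^ 4 * ∫ ψ in (0 : ℝ)..R, sliceSq L P ψ) atTop (nhds 0) := by
  have hinv : Tendsto (fun R : ℝ => R⁻¹ ^ 2) atTop (nhds 0) := by
    simpa using (tendsto_inv_atTop_zero (𝕜 := ℝ)).pow 2
  refine (((isBigO_refl _ _).mul hP).congr' .rfl ?_).trans_tendsto hinv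
  filter_upwards [eventually_gt_atTop 0] with R hR
  field_simp

theorem integral_cutoff_mul_le {χ Φ Φ' : ℝ → ℝ} {c : ℝ}
    (hh : Continuous (uncurry h)) (hP : Continuous (uncurry P)) (hχ : IntegrableOn χ (Ioi 0))
    (hχc : Continuous χ) (hχ0 : ∀ ψ, 0 ≤ χ ψ) (hr : 0 < r) (hΦ'c : Continuous Φ')
    (hΦ : ∀ ψ, HasDerivAt Φ (Φ' ψ) ψ) (hΦ0 : Φ 0 = 0) (hΦr : Φ r⁻¹ = 0)
    (hle : ∀ ψ ∈ Icc 0 r⁻¹, (1 - r * ψ) ^ 4 * sliceSq L h ψ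
      ≤ χ ψ + Φ' ψ + c * r ^ 4 * sliceSq L P ψ) :
    ∫ ψ in (0 : ℝ)..r⁻¹, (1 - r * ψ) ^ 4 * sliceSq L h ψ
      ≤ (∫ ψ in Ioi 0, χ ψ) + c * r ^ 4 * ∫ ψ in (0 : ℝ)..r⁻¹, sliceSq L P ψ := by
  have hh' := continuous_sliceSq L hh
  have hP' := continuous_sliceSq L hP
  have hr0 : 0 ≤ r⁻¹ := inv_nonneg.2 hr.le
  have hint {v : ℝ → ℝ} (hv : Continuous v) := hv.intervalIntegrable (μ := volume) 0 r⁻¹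
  calc _ ≤ ∫ ψ in (0 : ℝ)..r⁻¹, χ ψ + Φ' ψ + c * r ^ 4 * sliceSq L P ψ :=
        intervalIntegral.integral_mono_on hr0 (hint (by fun_prop)) (hint (by fun_prop)) hle
    _ = (∫ ψ in Ioc 0 r⁻¹, χ ψ) + c * r ^ 4 * ∫ ψ in (0 : ℝ)..r⁻¹, sliceSq L P ψ := by
        rw [intervalIntegral.integral_add (hint (by fun_prop)) (hint (by fun_prop)),
          intervalIntegral.integral_add (hint hχc) (hint hΦ'c),
          intervalIntegral.integral_eq_sub_of_hasDerivAt (fun ψ _ => hΦ ψ) (hint hΦ'c),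
          intervalIntegral.integral_const_mul, hΦ0, hΦr, intervalIntegral.integral_of_le hr0,
          sub_zero, add_zero]
    _ ≤ _ := by
        gcongr
        exacts [.of_forall hχ0, Ioc_subset_Ioi_self]

variable [hL : Fact (0 < L)]

theorem two_mul_mul_sliceInner_le (hf : Continuous (uncurry f)) (hg : Continuous (uncurry g))
    (x y ψ : ℝ) :
    2 * x * y * sliceInner L f g ψ ≤ x ^ 2 * sliceSq L f ψ + y ^ 2 * sliceSq L g ψ := by
  have hfψ := continuous_slice hf ψ
  have hgψ := continuous_slice hg ψ
  simp only [sliceInner, sliceSq, ← intervalIntegral.integral_const_mul]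
  rw [← intervalIntegral.integral_add (((hfψ.fun_pow 2).const_mul _).intervalIntegrable 0 L)
    (((hgψ.fun_pow 2).const_mul _).intervalIntegrable 0 L)]
  refine integral_mono_of_continuous (by fun_prop) (by fun_prop) fun s => ?_
  linarith [sq_nonneg (x * f s ψ - y * g s ψ)]

/-- Expand `(∂_sP - κ∂_ψ²P)²/κ`. -/
theorem sliceSq_dS_add_sliceSq_dPsi_le (hq : 0 < q) (hκ : Continuous κ)
    (hκq : ∀ s, κ s ∈ Icc q⁻¹ q) (hP : Smooth2 P) (ψ : ℝ) :
    sliceSq L (dS 1 P) ψ + sliceSq L (dPsi 2 P) ψ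
      ≤ q ^ 2 * sliceSq L (heat κ P) ψ + 2 * q * sliceInner L (dS 1 P) (dPsi 2 P) ψ := by
  have ha := continuous_slice (hP.dS 1).continuous ψ
  have hb := continuous_slice (hP.dPsi 2).continuous ψ
  have hf := continuous_slice (continuous_heat hκ hP) ψ
  simp only [sliceInner, sliceSq, ← intervalIntegral.integral_const_mul]
  rw [← intervalIntegral.integral_add ((ha.fun_pow 2).intervalIntegrable 0 L)
    ((hb.fun_pow 2).intervalIntegrable 0 L),
    ← intervalIntegral.integral_add (((hf.fun_pow 2).const_mul _).intervalIntegrable 0 L)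
    (((ha.fun_mul hb).const_mul _).intervalIntegrable 0 L)]
  refine integral_mono_of_continuous (by fun_prop) (by fun_prop) fun s => ?_
  obtain ⟨hlo, hhi⟩ := hκq s
  have hκpos : 0 < κ s := (inv_pos.2 hq).trans_le hlo
  have hqκ : 1 ≤ q * κ s := (inv_le_iff_one_le_mul₀' hq).1 hlo
  have hqκ' : 1 ≤ q / κ s := (one_le_div hκpos).2 hhi
  set a := dS 1 P s ψ
  set b := dPsi 2 P s ψ
  have hfs : heat κ P s ψ = a - κ s * b := rfl
  calc a ^ 2 + b ^ 2 ≤ q / κ s * a ^ 2 + q * κ s * b ^ 2 := by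
        gcongr <;> exact le_mul_of_one_le_left (sq_nonneg _) ‹_›
    _ = q / κ s * heat κ P s ψ ^ 2 + 2 * q * (a * b) := by rw [hfs]; field_simp; ring
    _ ≤ q ^ 2 * heat κ P s ψ ^ 2 + 2 * q * (a * b) := by
        gcongr
        rw [div_le_iff₀ hκpos]
        nlinarith

theorem cutoff_sq_mul_sliceSq_dPsi_one_le (hP : Smooth2 P) (r ψ : ℝ) :
    3 / 4 * ((1 - r * ψ) ^ 2 * sliceSq L (dPsi 1 P) ψ)
      ≤ ((1 - r * ψ) ^ 2 * (sliceSq L (dPsi 1 P) ψ + sliceInner L P (dPsi 2 P) ψ)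
          - 2 * r * (1 - r * ψ) * sliceInner L P (dPsi 1 P) ψ)
        + 4 * r ^ 2 * sliceSq L P ψ - (1 - r * ψ) ^ 2 * sliceInner L P (dPsi 2 P) ψ := by
  have hcross := two_mul_mul_sliceInner_le (L := L) hP.continuous (hP.dPsi 1).continuous
    (2 * r) ((1 - r * ψ) / 2) ψ
  linarith

/-- The cutoff derivatives are absorbed at the cost of a residual of size `r⁴ ‖P‖²`. -/
theorem exists_hasDerivAt_energyFlux (hq : 0 < q) (hκ : Continuous κ)
    (hκq : ∀ s, κ s ∈ Icc q⁻¹ q) (hP : Smooth2 P) (hp : PeriodicS L P) (r : ℝ) :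
    ∃ Φ' : ℝ → ℝ, Continuous Φ' ∧ (∀ ψ, HasDerivAt (energyFlux L q r P) (Φ' ψ) ψ) ∧
      ∀ ψ, (1 - r * ψ) ^ 4 * (sliceSq L (dS 1 P) ψ + sliceSq L (dPsi 2 P) ψ)
        ≤ 2 * ((1 - r * ψ) ^ 4 * (q ^ 2 * sliceSq L (heat κ P) ψ)) + 2 * Φ' ψ
          + (768 * q ^ 2 + 18432 * q ^ 4) * r ^ 4 * sliceSq L P ψ := by
  have hPc := hP.continuous
  have hac := (hP.dS 1).continuous
  have hbc := (hP.dPsi 2).continuous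
  have hcc := (hP.dPsi 1).continuous
  refine ⟨_, ?_, fun ψ =>
    ((hasDerivAt_cutoff_pow_mul (hasDerivAt_sliceInner_dS_one_dPsi_one hP hp ψ) r 4).const_mul
      (2 * q)).add
    ((hasDerivAt_cutoff_pow_mul (hasDerivAt_sliceInner_dPsi_one hP ψ) r 2).const_mul
      (96 * q ^ 2 * r ^ 2)), fun ψ => ?_⟩
  · have h₁ := continuous_sliceInner L hac hbc
    have h₂ := continuous_sliceInner L hac hcc
    have h₃ := continuous_sliceInner L hPc hbc
    have h₄ := continuous_sliceInner L hPc hcc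
    have h₅ := continuous_sliceSq L hcc
    fun_prop
  have hellip := mul_le_mul_of_nonneg_left (sliceSq_dS_add_sliceSq_dPsi_le (L := L) hq hκ hκq hP ψ)
    (by positivity : 0 ≤ (1 - r * ψ) ^ 4)
  have hmixed := two_mul_mul_sliceInner_le (L := L) hac hcc
    ((1 - r * ψ) ^ 2 / 2) (8 * q * r * (1 - r * ψ)) ψ
  have hnormal := mul_le_mul_of_nonneg_left (cutoff_sq_mul_sliceSq_dPsi_one_le (L := L) hP r ψ)
    (by positivity : 0 ≤ 96 * q ^ 2 * r ^ 2)
  have hcross := two_mul_mul_sliceInner_le (L := L) hPc hbc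
    (96 * q ^ 2 * r ^ 2) (-(1 - r * ψ) ^ 2 / 2) ψ
  have hγ : 0 ≤ q ^ 2 * r ^ 2 * (1 - r * ψ) ^ 2 * sliceSq L (dPsi 1 P) ψ :=
    mul_nonneg (by positivity) (sliceSq_nonneg _ _)
  have hα : 0 ≤ (1 - r * ψ) ^ 4 * sliceSq L (dS 1 P) ψ :=
    mul_nonneg (by positivity) (sliceSq_nonneg _ _)
  have hβ : 0 ≤ (1 - r * ψ) ^ 4 * sliceSq L (dPsi 2 P) ψ :=
    mul_nonneg (by positivity) (sliceSq_nonneg _ _)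
  push_cast
  linarith

/-- On `[0, R]` the cutoff vanishing at `2R` is at least `(1/2)⁴`. -/
theorem integral_le_integral_cutoff_mul {v : ℝ → ℝ} (hv : Continuous v) (hv0 : ∀ ψ, 0 ≤ v ψ)
    {R : ℝ} (hR : 0 < R) :
    ∫ ψ in (0 : ℝ)..R, v ψ ≤ 16 * ∫ ψ in (0 : ℝ)..2 * R, (1 - (2 * R)⁻¹ * ψ) ^ 4 * v ψ := by
  have hcut (ψ : ℝ) (hψ : ψ ∈ Icc 0 R) : v ψ ≤ 16 * ((1 - (2 * R)⁻¹ * ψ) ^ 4 * v ψ) := by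
    have hhalf : 1 / 2 ≤ 1 - (2 * R)⁻¹ * ψ := by
      have hle : (2 * R)⁻¹ * ψ ≤ (2 * R)⁻¹ * R := by gcongr; exact hψ.2
      have heq : (2 * R)⁻¹ * R = 1 / 2 := by field_simp
      linarith
    nlinarith [pow_le_pow_left₀ (by norm_num) hhalf 4, hv0 ψ]
  have hint (T : ℝ) : IntervalIntegrable (fun ψ => (1 - (2 * R)⁻¹ * ψ) ^ 4 * v ψ) volume 0 T :=
    Continuous.intervalIntegrable (by fun_prop) 0 T
  refine (intervalIntegral.integral_mono_on hR.le (hv.intervalIntegrable 0 R)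
    ((hint R).const_mul 16) hcut).trans ?_
  rw [intervalIntegral.integral_const_mul]
  gcongr
  exact intervalIntegral.integral_mono_interval le_rfl hR.le (by linarith)
    (.of_forall fun ψ => mul_nonneg (by positivity) (hv0 ψ)) (hint _)

/-- If `(1 - rψ)⁴ ‖h‖²` is dominated, up to a derivative vanishing at the endpoints of `[0, r⁻¹]`
and a residual `r⁴ ‖P‖²`, then `r → 0` bounds `h`. -/
theorem L2BigO.of_cutoff {h P : ι → ℝ → ℝ → ℝ} {χ : ι → ℝ → ℝ} {c : ℝ}
    (hh : ∀ i, Continuous (uncurry (h i))) (hP : ∀ i, Continuous (uncurry (P i)))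
    (hgrow : ∀ i, QuadraticGrowth L (P i)) (hχ : L1BigO χ N) (hχc : ∀ i, Continuous (χ i))
    (hχ0 : ∀ i ψ, 0 ≤ χ i ψ)
    (hcut : ∀ i, ∀ r ∈ Ioc (0 : ℝ) 1, ∃ Φ Φ' : ℝ → ℝ, Continuous Φ' ∧
      (∀ ψ, HasDerivAt Φ (Φ' ψ) ψ) ∧ Φ 0 = 0 ∧ Φ r⁻¹ = 0 ∧
      ∀ ψ ∈ Icc 0 r⁻¹, (1 - r * ψ) ^ 4 * sliceSq L (h i) ψ
        ≤ χ i ψ + Φ' ψ + c * r ^ 4 * sliceSq L (P i) ψ) :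
    L2BigO L 0 h N := by
  refine .of_intervalIntegral_le hh (hχ.isBigO.const_mul_left 16)
    (u := fun i R => 16 * c * ((2 * R)⁻¹ ^ 4 * ∫ ψ in (0 : ℝ)..2 * R, sliceSq L (P i) ψ))
    (fun i => ?_) fun i => ?_
  · have := ((hgrow i).tendsto_inv_pow_four_mul.comp
      (tendsto_id.const_mul_atTop two_pos)).const_mul (16 * c)
    rwa [mul_zero] at this
  · filter_upwards [eventually_ge_atTop 1] with R hR
    have hr : 0 < (2 * R)⁻¹ := by positivity
    obtain ⟨Φ, Φ', hΦ'c, hΦ, hΦ0, hΦr, hle⟩ :=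
      hcut i (2 * R)⁻¹ ⟨hr, inv_le_one_of_one_le₀ (by linarith)⟩
    have hcutoff := integral_cutoff_mul_le (hh i) (hP i) (hχ.integrableOn i) (hχc i) (hχ0 i) hr
      hΦ'c hΦ hΦ0 hΦr hle
    rw [inv_inv] at hcutoff
    linarith [integral_le_integral_cutoff_mul (continuous_sliceSq L (hh i))
      (sliceSq_nonneg (h i)) (by linarith : 0 < R)]

/-- The uniform graph norm of the heat operator, with weight `⟨ψ⟩^m`: a family and its
derivatives `∂_s`, `∂_ψ`, `∂_ψ²` are uniformly square integrable. -/
structure XBigO (L : ℝ) (m : ℕ) (P : ι → ℝ → ℝ → ℝ) (N : ι → ℝ) : Prop where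
  self : L2BigO L m P N
  dS_one : L2BigO L m (fun i => dS 1 (P i)) N
  dPsi_one : L2BigO L m (fun i => dPsi 1 (P i)) N
  dPsi_two : L2BigO L m (fun i => dPsi 2 (P i)) N

variable {P : ι → ℝ → ℝ → ℝ}

theorem one_sub_mul_mem_Icc {ψ : ℝ} (hr : 0 < r) (hψ : ψ ∈ Icc 0 r⁻¹) :
    1 - r * ψ ∈ Icc (0 : ℝ) 1 := by
  have hle := mul_le_mul_of_nonneg_left hψ.2 hr.le
  rw [mul_inv_cancel₀ hr.ne'] at hle
  constructor <;> linarith [mul_nonneg hr.le hψ.1]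

theorem L2BigO.of_sliceSq_le_of_heat {h : ι → ℝ → ℝ → ℝ} (hq : 0 < q) (hκ : Continuous κ)
    (hκq : ∀ s, κ s ∈ Icc q⁻¹ q) (hP : ∀ i, Smooth2 (P i)) (hp : ∀ i, PeriodicS L (P i))
    (hP0 : ∀ i s, P i s 0 = 0) (hgrow : ∀ i, QuadraticGrowth L (P i))
    (hheat : L2BigO L 0 (fun i => heat κ (P i)) N) (hh : ∀ i, Continuous (uncurry (h i)))
    (hle : ∀ i ψ, sliceSq L (h i) ψ
      ≤ sliceSq L (dS 1 (P i)) ψ + sliceSq L (dPsi 2 (P i)) ψ) : L2BigO L 0 h N := by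
  have hχ := hheat.l1BigO.const_mul (2 * q ^ 2)
  simp only [mul_zero, pow_zero, one_mul] at hχ
  refine of_cutoff (c := 768 * q ^ 2 + 18432 * q ^ 4) hh (fun i => (hP i).continuous) hgrow hχ
    (fun i => (continuous_sliceSq L (hheat.continuous i)).const_mul _)
    (fun i ψ => mul_nonneg (by positivity) (sliceSq_nonneg _ _)) fun i r hr => ?_
  obtain ⟨Φ', hc, hderiv, hflux⟩ := exists_hasDerivAt_energyFlux hq hκ hκq (hP i) (hp i) r
  refine ⟨fun ψ => 2 * energyFlux L q r (P i) ψ, fun ψ => 2 * Φ' ψ, hc.const_mul 2,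
    fun ψ => (hderiv ψ).const_mul 2, by simp only [energyFlux_zero (hP0 i), mul_zero],
    by simp only [energyFlux_inv hr.1.ne', mul_zero], fun ψ hψ => ?_⟩
  obtain ⟨hp0, hp1⟩ := one_sub_mul_mem_Icc hr.1 hψ
  have hχle := mul_le_mul_of_nonneg_right (pow_le_one₀ (n := 4) hp0 hp1)
    (mul_nonneg (sq_nonneg q) (sliceSq_nonneg (L := L) (heat κ (P i)) ψ))
  have hcut := mul_le_mul_of_nonneg_left (hle i ψ) (pow_nonneg hp0 4)
  linarith [hflux ψ]

theorem QuadraticGrowth.of_sliceSq_le {P h : ℝ → ℝ → ℝ} (hP : Continuous (uncurry P))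
    (hfin : FiniteL2 L P) (hh : Continuous (uncurry h))
    (hle : ∀ ψ ≥ 0, sliceSq L h ψ ≤ (1 + ψ) ^ 2 * sliceSq L P ψ) : QuadraticGrowth L h := by
  refine .of_bound (4 * L2sq L P) ((eventually_ge_atTop 1).mono fun R hR => ?_)
  have hR0 : 0 ≤ R := zero_le_one.trans hR
  have hPc := continuous_sliceSq L hP
  rw [Real.norm_of_nonneg
    (intervalIntegral.integral_nonneg hR0 fun _ _ => sliceSq_nonneg _ _), Real.norm_of_nonneg
    (sq_nonneg R)]
  calc ∫ ψ in (0 : ℝ)..R, sliceSq L h ψ ≤ ∫ ψ in (0 : ℝ)..R, (2 * R) ^ 2 * sliceSq L P ψ := by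
        refine intervalIntegral.integral_mono_on hR0
          ((continuous_sliceSq L hh).intervalIntegrable 0 R)
          ((hPc.const_mul _).intervalIntegrable 0 R) fun ψ hψ => (hle ψ hψ.1).trans ?_
        have := sliceSq_nonneg (L := L) P ψ
        have := hψ.1
        gcongr
        linarith [hψ.2]
    _ = 4 * R ^ 2 * ∫ ψ in (0 : ℝ)..R, sliceSq L P ψ := by
        rw [intervalIntegral.integral_const_mul]
        ring
    _ ≤ 4 * R ^ 2 * L2sq L P := by
        gcongr
        exact hfin.intervalIntegral_le hP hR0
    _ = 4 * L2sq L P * R ^ 2 := by ring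

theorem QuadraticGrowth.of_finiteL2 {P : ℝ → ℝ → ℝ} (hP : Continuous (uncurry P))
    (hfin : FiniteL2 L P) : QuadraticGrowth L P :=
  .of_sliceSq_le hP hfin hP fun ψ hψ =>
    le_mul_of_one_le_left (sliceSq_nonneg P ψ) (one_le_pow₀ (by linarith))

theorem QuadraticGrowth.wt_one {P : ℝ → ℝ → ℝ} (hP : Continuous (uncurry P))
    (hfin : FiniteL2 L P) : QuadraticGrowth L (wt 1 P) :=
  .of_sliceSq_le hP hfin (continuous_wt 1 hP) fun ψ _ => (sliceSq_wt L 1 P ψ).le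

/-- Integrate `(1 - rψ)⁴ ‖∂_ψP‖²` by parts against the zero boundary value. -/
theorem L2BigO.dPsi_one (hP : ∀ i, Smooth2 (P i)) (hP0 : ∀ i s, P i s 0 = 0)
    (hself : L2BigO L 0 P N) (hdPsi : L2BigO L 0 (fun i => dPsi 2 (P i)) N) :
    L2BigO L 0 (fun i => dPsi 1 (P i)) N := by
  have hχ := (hself.l1BigO.const_mul 10).add hdPsi.l1BigO
  simp only [mul_zero, pow_zero, one_mul] at hχ
  have hcP (i : ι) := continuous_sliceSq L (hP i).continuous
  have hcb (i : ι) := continuous_sliceSq L ((hP i).dPsi 2).continuous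
  refine of_cutoff (c := 0) (fun i => ((hP i).dPsi 1).continuous) hself.continuous
    (fun i => .of_finiteL2 (hself.continuous i) (wt_zero (P i) ▸ hself.finite i)) hχ
    (fun i => by fun_prop)
    (fun i ψ => add_nonneg (mul_nonneg (by norm_num) (sliceSq_nonneg _ _)) (sliceSq_nonneg _ _))
    fun i r hr => ⟨_, _, ?_, fun ψ => (hasDerivAt_cutoff_pow_mul
      (hasDerivAt_sliceInner_dPsi_one (L := L) (hP i) ψ) r 2).const_mul 2, ?_, ?_, fun ψ hψ => ?_⟩
  · have h₁ := continuous_sliceSq L ((hP i).dPsi 1).continuous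
    have h₂ := continuous_sliceInner L (hP i).continuous ((hP i).dPsi 2).continuous
    have h₃ := continuous_sliceInner L (hP i).continuous ((hP i).dPsi 1).continuous
    fun_prop
  · simp [sliceInner, hP0 i]
  · simp [hr.1.ne']
  obtain ⟨hp0, hp1⟩ := one_sub_mul_mem_Icc hr.1 hψ
  have hcut := cutoff_sq_mul_sliceSq_dPsi_one_le (L := L) (hP i) r ψ
  have hcross := two_mul_mul_sliceInner_le (L := L) (hP i).continuous ((hP i).dPsi 2).continuous
    1 (-(1 - r * ψ) ^ 2 / 2) ψ
  have hp4 := mul_le_mul_of_nonneg_right (pow_le_one₀ (n := 4) hp0 hp1)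
    (sliceSq_nonneg (L := L) (dPsi 2 (P i)) ψ)
  have hp2 := mul_le_mul_of_nonneg_right (pow_le_pow_of_le_one hp0 hp1 (by norm_num : 2 ≤ 4))
    (sliceSq_nonneg (L := L) (dPsi 1 (P i)) ψ)
  have hr2 := mul_le_mul_of_nonneg_right (pow_le_one₀ (n := 2) hr.1.le hr.2)
    (sliceSq_nonneg (L := L) (P i) ψ)
  have hγ := mul_nonneg (sq_nonneg (1 - r * ψ)) (sliceSq_nonneg (L := L) (dPsi 1 (P i)) ψ)
  have hβ := sliceSq_nonneg (L := L) (dPsi 2 (P i)) ψ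
  push_cast
  linarith

theorem XBigO.of_heat_of_zero_of_unweighted (hq : 0 < q) (hκ : Continuous κ)
    (hκq : ∀ s, κ s ∈ Icc q⁻¹ q) (hP : ∀ i, Smooth2 (P i)) (hp : ∀ i, PeriodicS L (P i))
    (hP0 : ∀ i s, P i s 0 = 0) (hgrow : ∀ i, QuadraticGrowth L (P i))
    (hheat : L2BigO L 0 (fun i => heat κ (P i)) N)
    (hmean : L2BigO L 0 (fun i _ => sliceMean L κ (P i)) N) : XBigO L 0 P N := by
  have hdS : L2BigO L 0 (fun i => dS 1 (P i)) N :=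
    .of_sliceSq_le_of_heat hq hκ hκq hP hp hP0 hgrow hheat (fun i => ((hP i).dS 1).continuous)
      fun i ψ => le_add_of_nonneg_right (sliceSq_nonneg _ _)
  have hdPsi : L2BigO L 0 (fun i => dPsi 2 (P i)) N :=
    .of_sliceSq_le_of_heat hq hκ hκq hP hp hP0 hgrow hheat (fun i => ((hP i).dPsi 2).continuous)
      fun i ψ => le_add_of_nonneg_left (sliceSq_nonneg _ _)
  have hκpos : 0 < ∫ s in (0 : ℝ)..L, κ s :=
    intervalIntegral.intervalIntegral_pos_of_pos (hκ.intervalIntegrable 0 L)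
      (fun s => (inv_pos.2 hq).trans_le (hκq s).1) hL.out
  have hself := L2BigO.of_dS_one hP hdS hκ hκpos.ne' hmean
  exact ⟨hself, hdS, .dPsi_one hP hP0 hself hdPsi, hdPsi⟩

end Energy

/-! ### Weights and boundary values -/

section Weights

open Asymptotics

variable {ι : Type*} {L q : ℝ} {m : ℕ} {N : ι → ℝ} {κ : ℝ → ℝ} {f g h : ℝ → ℝ → ℝ}
  {P Q : ι → ℝ → ℝ → ℝ}

theorem Smooth2.dS_one_wt (hh : Smooth2 h) (m : ℕ) : dS 1 (wt m h) = wt m (dS 1 h) :=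
  funext₂ fun s ψ => dS_one_eq ((hh.hasDerivAt_left s ψ).const_mul _)

theorem Smooth2.dPsi_one_wt_one (hh : Smooth2 h) :
    dPsi 1 (wt 1 h) = fun s ψ => h s ψ + wt 1 (dPsi 1 h) s ψ := by
  ext s ψ
  simp only [wt, pow_one]
  refine dPsi_one_eq (h := fun s ψ => (1 + ψ) ^ 1 * h s ψ) ?_
  simpa using ((hasDerivAt_id' ψ).const_add 1).fun_mul (hh.hasDerivAt_right s ψ)

theorem Smooth2.dPsi_two_wt_one (hh : Smooth2 h) :
    dPsi 2 (wt 1 h) = fun s ψ => 2 * dPsi 1 h s ψ + wt 1 (dPsi 2 h) s ψ := by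
  rw [← dPsi_dPsi 1 1, hh.dPsi_one_wt_one, hh.dPsi_add ((hh.dPsi 1).wt 1),
    (hh.dPsi 1).dPsi_one_wt_one, dPsi_dPsi]
  ext
  ring

theorem heat_wt_one (κ : ℝ → ℝ) (hh : Smooth2 h) :
    heat κ (wt 1 h) = fun s ψ => wt 1 (heat κ h) s ψ - 2 * (κ s * dPsi 1 h s ψ) := by
  ext
  simp only [heat, hh.dS_one_wt, hh.dPsi_two_wt_one, wt]
  ring

theorem heat_add (κ : ℝ → ℝ) (hf : Smooth2 f) (hg : Smooth2 g) :
    heat κ (fun s ψ => f s ψ + g s ψ) = fun s ψ => heat κ f s ψ + heat κ g s ψ := by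
  ext
  simp only [heat, hf.dS_add hg, hf.dPsi_add hg]
  ring

theorem sliceMean_wt (L : ℝ) (ρ : ℝ → ℝ) (m : ℕ) (h : ℝ → ℝ → ℝ) :
    (fun _ => sliceMean L ρ (wt m h)) = wt m (fun _ => sliceMean L ρ h) := by
  ext _ ψ
  simp only [sliceMean, wt, ← intervalIntegral.integral_const_mul, mul_left_comm]

theorem periodicS_wt (hp : PeriodicS L h) (m : ℕ) : PeriodicS L (wt m h) := fun ψ s => by
  simp only [wt, hp ψ s]

variable [hL : Fact (0 < L)]

/-- The commutator of the heat operator with the weight is of lower order in `ψ`, so the weights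
are gained one power at a time. -/
theorem XBigO.of_heat_of_zero (hq : 0 < q) (hκ : Continuous κ) (hκp : Periodic κ L)
    (hκq : ∀ s, κ s ∈ Icc q⁻¹ q) (hP : ∀ i, Smooth2 (P i)) (hp : ∀ i, PeriodicS L (P i))
    (hP0 : ∀ i s, P i s 0 = 0) (hgrow : ∀ i, QuadraticGrowth L (P i))
    (hheat : L2BigO L m (fun i => heat κ (P i)) N)
    (hmean : L2BigO L m (fun i _ => sliceMean L κ (P i)) N) : XBigO L m P N := by
  induction m generalizing P with
  | zero => exact .of_heat_of_zero_of_unweighted hq hκ hκq hP hp hP0 hgrow hheat hmean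
  | succ m ih =>
    have hX : XBigO L m P N := ih hP hp hP0 hgrow (hheat.mono_weight m.le_succ)
      (hmean.mono_weight m.le_succ)
    have hfin (i : ι) : FiniteL2 L (P i) :=
      wt_zero (P i) ▸ (hX.self.mono_weight (Nat.zero_le m)).finite i
    have hXwt : XBigO L m (fun i => wt 1 (P i)) N := by
      refine ih (fun i => (hP i).wt 1) (fun i => periodicS_wt (hp i) 1)
        (fun i s => by simp [wt, hP0]) (fun i => .wt_one (hP i).continuous (hfin i)) ?_ ?_
      · simp only [heat_wt_one κ (hP _)]
        exact ((L2BigO.wt_iff hheat.continuous).2 hheat).sub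
          ((hX.dPsi_one.periodic_mul hκ hκp).const_mul 2)
      · have hmean' := (L2BigO.wt_iff hmean.continuous).2 hmean
        simpa only [← sliceMean_wt] using hmean'
    obtain ⟨hself, hdS, hdPsi, hdPsi2⟩ := hXwt
    simp only [(hP _).dS_one_wt, (hP _).dPsi_one_wt_one, (hP _).dPsi_two_wt_one]
      at hdS hdPsi hdPsi2
    have hdPsi' := hdPsi.sub hX.self
    have hdPsi2' := hdPsi2.sub (hX.dPsi_one.const_mul 2)
    simp only [add_sub_cancel_left] at hdPsi' hdPsi2'
    exact ⟨(L2BigO.wt_iff hX.self.continuous).1 hself, (L2BigO.wt_iff hX.dS_one.continuous).1 hdS,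
      (L2BigO.wt_iff hX.dPsi_one.continuous).1 hdPsi',
      (L2BigO.wt_iff hX.dPsi_two.continuous).1 hdPsi2'⟩

/-- The extension `e^{-ψ} h(s, 0)` of the boundary values of `h`. -/
noncomputable def traceLift (h : ℝ → ℝ → ℝ) : ℝ → ℝ → ℝ :=
  fun s ψ => h s 0 * Real.exp (-ψ)

theorem smooth2_traceLift (hh : Smooth2 h) : Smooth2 (traceLift h) :=
  ((hh.contDiff_left 0).comp contDiff_fst).mul (by fun_prop)

theorem dS_one_traceLift (hh : Smooth2 h) : dS 1 (traceLift h) = traceLift (dS 1 h) :=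
  funext₂ fun s _ => dS_one_eq ((hh.hasDerivAt_left s 0).mul_const _)

theorem dPsi_traceLift (h : ℝ → ℝ → ℝ) (j : ℕ) :
    dPsi j (traceLift h) = fun s ψ => (-1) ^ j * traceLift h s ψ := by
  ext s ψ
  have := congrFun (iteratedDeriv_exp_const_mul j (-1)) ψ
  simp only [neg_one_mul] at this
  simp only [dPsi, traceLift]
  rw [iteratedDeriv_const_mul_field, this]
  ring

theorem integrableOn_pow_mul_exp_neg_sq (m : ℕ) :
    IntegrableOn (fun ψ : ℝ => (1 + ψ) ^ (2 * m) * Real.exp (-ψ) ^ 2) (Ioi 0) := by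
  refine integrable_of_isBigO_exp_neg one_pos (by fun_prop) ?_
  have hpow := (Real.isLittleO_pow_exp_atTop (n := 2 * m)).comp_tendsto
    (tendsto_atTop_add_const_left atTop (1 : ℝ) tendsto_id)
  refine ((hpow.isBigO.mul (isBigO_refl (fun ψ : ℝ => Real.exp (-ψ) ^ 2) _)).trans
    (.of_bound (Real.exp 1) (.of_forall fun ψ => le_of_eq ?_)))
  simp only [comp_apply, id, Real.norm_eq_abs, abs_of_pos, Real.exp_pos,
    ← Real.exp_nat_mul, ← Real.exp_add]
  ring_nf

protected theorem L2BigO.traceLift (hP : ∀ i, Continuous (uncurry (P i)))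
    (hN : (fun i => sliceSq L (P i) 0) =O[⊤] N) : L2BigO L m (fun i => traceLift (P i)) N := by
  have hc (i : ι) := continuous_slice (hP i) 0
  refine .of_sq_le_mul (β := fun i s => P i s 0 ^ 2) (fun i => ?_) (fun i => (hc i).pow 2) hN
    (integrableOn_pow_mul_exp_neg_sq m) fun i s ψ _ => (mul_pow _ _ 2).le
  exact ((hc i).comp continuous_fst).mul (by fun_prop)

protected theorem XBigO.traceLift (hP : ∀ i, Smooth2 (P i))
    (hN : (fun i => sliceSq L (P i) 0) =O[⊤] N)
    (hN' : (fun i => sliceSq L (dS 1 (P i)) 0) =O[⊤] N) :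
    XBigO L m (fun i => traceLift (P i)) N := by
  have hlift : L2BigO L m (fun i => traceLift (P i)) N :=
    .traceLift (fun i => (hP i).continuous) hN
  refine ⟨hlift, ?_, ?_, ?_⟩
  · simp only [dS_one_traceLift (hP _)]
    exact .traceLift (fun i => ((hP i).dS 1).continuous) hN'
  all_goals
    simp only [dPsi_traceLift]
    exact hlift.const_mul _

theorem XBigO.add (hP : ∀ i, Smooth2 (P i)) (hQ : ∀ i, Smooth2 (Q i)) (hXP : XBigO L m P N)
    (hXQ : XBigO L m Q N) : XBigO L m (fun i s ψ => P i s ψ + Q i s ψ) N := by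
  refine ⟨hXP.self.add hXQ.self, ?_, ?_, ?_⟩
  · simpa only [(hP _).dS_add (hQ _)] using hXP.dS_one.add hXQ.dS_one
  · simpa only [(hP _).dPsi_add (hQ _)] using hXP.dPsi_one.add hXQ.dPsi_one
  · simpa only [(hP _).dPsi_add (hQ _)] using hXP.dPsi_two.add hXQ.dPsi_two

protected theorem XBigO.heat (hκ : Continuous κ) (hκp : Periodic κ L) (hX : XBigO L m P N) :
    L2BigO L m (fun i => heat κ (P i)) N :=
  hX.dS_one.sub (hX.dPsi_two.periodic_mul hκ hκp)

theorem QuadraticGrowth.sub (hf : Continuous (uncurry f)) (hg : Continuous (uncurry g))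
    (hgrow_f : QuadraticGrowth L f) (hgrow_g : QuadraticGrowth L g) :
    QuadraticGrowth L (fun s ψ => f s ψ - g s ψ) := by
  refine (IsBigO.of_bound 2 ((eventually_ge_atTop 0).mono fun R hR => ?_)).trans
    (hgrow_f.add hgrow_g)
  have hfc := continuous_sliceSq L hf
  have hgc := continuous_sliceSq L hg
  rw [← intervalIntegral.integral_add (hfc.intervalIntegrable 0 R) (hgc.intervalIntegrable 0 R),
    Real.norm_of_nonneg (intervalIntegral.integral_nonneg hR fun _ _ => sliceSq_nonneg _ _),
    Real.norm_of_nonneg (intervalIntegral.integral_nonneg hR fun _ _ =>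
      add_nonneg (sliceSq_nonneg _ _) (sliceSq_nonneg _ _)), ← intervalIntegral.integral_const_mul]
  refine intervalIntegral.integral_mono_on hR
    ((continuous_sliceSq (h := fun s ψ => f s ψ - g s ψ) L (hf.sub hg)).intervalIntegrable 0 R)
    (((hfc.fun_add hgc).const_mul 2).intervalIntegrable 0 R) fun ψ _ => sliceSq_sub_le hf hg ψ

theorem XBigO.of_heat (hq : 0 < q) (hκ : Continuous κ) (hκp : Periodic κ L)
    (hκq : ∀ s, κ s ∈ Icc q⁻¹ q) (hQ : ∀ i, Smooth2 (Q i)) (hp : ∀ i, PeriodicS L (Q i))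
    (hgrow : ∀ i, QuadraticGrowth L (Q i))
    (hbdry : ∀ j ≤ 1, (fun i => sliceSq L (dS j (Q i)) 0) =O[⊤] N)
    (hheat : L2BigO L m (fun i => heat κ (Q i)) N)
    (hmean : L2BigO L m (fun i _ => sliceMean L κ (Q i)) N) : XBigO L m Q N := by
  have hE : XBigO L m (fun i => traceLift (Q i)) N :=
    .traceLift hQ (by simpa only [dS_zero] using hbdry 0 zero_le_one) (hbdry 1 le_rfl)
  have hEs (i : ι) := smooth2_traceLift (hQ i)
  let P (i : ι) (s ψ : ℝ) : ℝ := Q i s ψ - traceLift (Q i) s ψ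
  have hPs (i : ι) : Smooth2 (P i) := ContDiff.sub (hQ i) (hEs i)
  have hP_add : (fun i s ψ => P i s ψ + traceLift (Q i) s ψ) = Q :=
    funext₃ fun _ _ _ => sub_add_cancel _ _
  have hX : XBigO L m P N := by
    refine .of_heat_of_zero hq hκ hκp hκq hPs (fun i ψ s => ?_) (fun i s => ?_) (fun i => ?_) ?_ ?_
    · simp only [P, traceLift, hp i ψ s, hp i 0 s]
    · simp [P, traceLift]
    · refine (hgrow i).sub (hQ i).continuous (hEs i).continuous (.of_finiteL2 (hEs i).continuous ?_)
      exact wt_zero (traceLift (Q i)) ▸ (hE.self.mono_weight m.zero_le).finite i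
    · refine (hheat.sub (hE.heat hκ hκp)).congr (fun i => continuous_heat hκ (hPs i))
        fun i s ψ _ => eq_sub_of_add_eq ?_
      rw [← congrFun₂ (heat_add κ (hPs i) (hEs i)) s ψ, congrFun hP_add i]
    · refine (hmean.sub (hE.self.sliceMean hκ)).congr
        (fun i => (continuous_sliceMean L hκ (hPs i).continuous).comp continuous_snd)
        fun i _ ψ _ => ?_
      simp only [sliceMean, P, mul_sub]
      exact intervalIntegral.integral_sub
        ((hκ.mul (continuous_slice (hQ i).continuous ψ)).intervalIntegrable 0 L)
        ((hκ.mul (continuous_slice (hEs i).continuous ψ)).intervalIntegrable 0 L)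
  exact hP_add ▸ hX.add hPs hEs hE

end Weights

/-! ### The zero mode -/

section ZeroMode

open Asymptotics

variable {ι : Type*} {L : ℝ} {m : ℕ} {N : ι → ℝ} {κ : ℝ → ℝ}

/-- `Q` solves the linear Prandtl problem `∂_sQ - κ ∂_ψ²Q = F + ∂_ψ²G` on `𝕋_L × ℝ₊` with
`κ = ω₀ q_e`, and the zero modes of `κQ` and `G` decay as `ψ → ∞`. -/
structure IsLinearPrandtl (L : ℝ) (κ : ℝ → ℝ) (Q F G : ℝ → ℝ → ℝ) : Prop where
  smooth : Smooth2 Q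
  smooth_source : Smooth2 F
  smooth_flux : Smooth2 G
  periodic : PeriodicS L Q
  heat_eq : ∀ s, ∀ ψ > 0, heat κ Q s ψ = F s ψ + dPsi 2 G s ψ
  tendsto_sliceMean : Tendsto (sliceMean L κ Q) atTop (nhds 0)
  tendsto_sliceMean_flux : Tendsto (sliceMean L 1 G) atTop (nhds 0)

/-- The quantity `κQ + G`, in terms of which the equation reads `∂_ψ²(κQ + G) = ∂_sQ - F`. -/
def prandtlPotential (κ : ℝ → ℝ) (Q G : ℝ → ℝ → ℝ) : ℝ → ℝ → ℝ :=
  fun s ψ => κ s * Q s ψ + G s ψ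

theorem sliceMean_one (L : ℝ) (h : ℝ → ℝ → ℝ) :
    sliceMean L 1 h = fun ψ => ∫ s in (0 : ℝ)..L, h s ψ := by
  simp only [sliceMean, Pi.one_apply, one_mul, funext_iff, implies_true]

theorem hasDerivAt_sliceMean_one {h : ℝ → ℝ → ℝ} (hh : Smooth2 h) (ψ : ℝ) :
    HasDerivAt (sliceMean L 1 h) (sliceMean L 1 (dPsi 1 h) ψ) ψ := by
  simpa only [sliceMean_one] using hh.hasDerivAt_integral L ψ

namespace IsLinearPrandtl

variable {Q F G : ℝ → ℝ → ℝ}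

theorem smooth_potential (hκ : ContDiff ℝ (⊤ : ℕ∞) κ) (hQ : IsLinearPrandtl L κ Q F G) :
    Smooth2 (prandtlPotential κ Q G) :=
  ((hκ.comp contDiff_fst).mul hQ.smooth).add hQ.smooth_flux

theorem dPsi_potential (hκ : ContDiff ℝ (⊤ : ℕ∞) κ) (hQ : IsLinearPrandtl L κ Q F G) (j : ℕ) :
    dPsi j (prandtlPotential κ Q G) = prandtlPotential κ (dPsi j Q) (dPsi j G) := by
  have hκQ : Smooth2 fun s ψ => κ s * Q s ψ := (hκ.comp contDiff_fst).mul hQ.smooth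
  change dPsi j (fun s ψ => κ s * Q s ψ + G s ψ) = _
  rw [hκQ.dPsi_add hQ.smooth_flux]
  ext s ψ
  simp only [dPsi, prandtlPotential]
  rw [iteratedDeriv_const_mul_field]

theorem sliceMean_dPsi_potential (hκ : ContDiff ℝ (⊤ : ℕ∞) κ) (hQ : IsLinearPrandtl L κ Q F G)
    (j : ℕ) (ψ : ℝ) : sliceMean L 1 (dPsi j (prandtlPotential κ Q G)) ψ
      = sliceMean L κ (dPsi j Q) ψ + sliceMean L 1 (dPsi j G) ψ := by
  simp only [hQ.dPsi_potential hκ, sliceMean, prandtlPotential, Pi.one_apply, one_mul]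
  have hQc := continuous_slice (hQ.smooth.dPsi j).continuous ψ
  exact intervalIntegral.integral_add ((hκ.continuous.mul hQc).intervalIntegrable 0 L)
    ((continuous_slice (hQ.smooth_flux.dPsi j).continuous ψ).intervalIntegrable 0 L)

theorem sliceMean_dPsi_two_potential (hκ : ContDiff ℝ (⊤ : ℕ∞) κ)
    (hQ : IsLinearPrandtl L κ Q F G) {ψ : ℝ} (hψ : 0 < ψ) :
    sliceMean L 1 (dPsi 2 (prandtlPotential κ Q G)) ψ = -sliceMean L 1 F ψ := by
  have heq (s : ℝ) : dPsi 2 (prandtlPotential κ Q G) s ψ = dS 1 Q s ψ - F s ψ := by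
    have := hQ.heat_eq s ψ hψ
    simp only [hQ.dPsi_potential hκ, prandtlPotential, heat] at this ⊢
    linarith
  simp only [sliceMean, heq, Pi.one_apply, one_mul]
  rw [intervalIntegral.integral_sub
    ((continuous_slice (hQ.smooth.dS 1).continuous ψ).intervalIntegrable 0 L)
    ((continuous_slice hQ.smooth_source.continuous ψ).intervalIntegrable 0 L),
    integral_dS_one_eq_zero hQ.smooth hQ.periodic, zero_sub]

theorem tendsto_sliceMean_potential (hκ : ContDiff ℝ (⊤ : ℕ∞) κ)
    (hQ : IsLinearPrandtl L κ Q F G) :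
    Tendsto (sliceMean L 1 (prandtlPotential κ Q G)) atTop (nhds 0) := by
  have hsum : sliceMean L 1 (prandtlPotential κ Q G)
      = fun ψ => sliceMean L κ Q ψ + sliceMean L 1 G ψ :=
    funext (hQ.sliceMean_dPsi_potential hκ 0)
  simpa only [hsum, add_zero] using hQ.tendsto_sliceMean.add hQ.tendsto_sliceMean_flux

variable [hL : Fact (0 < L)]

/-- Since `B = ∫ (κQ + G) ds → 0` and `B'' = -∫ F ds` is integrable, `B'` has a limit, which can
only be zero. -/
theorem tendsto_sliceMean_dPsi_one_potential (hκ : ContDiff ℝ (⊤ : ℕ∞) κ)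
    (hQ : IsLinearPrandtl L κ Q F G) (hF : FiniteL2 L (wt 1 F)) :
    Tendsto (sliceMean L 1 (dPsi 1 (prandtlPotential κ Q G))) atTop (nhds 0) := by
  have hH := hQ.smooth_potential hκ
  have hmean : L2BigO L 1 (fun _ : Unit => fun _ => sliceMean L 1 F) fun _ => 1 :=
    (hF.l2BigO hQ.smooth_source.continuous).sliceMean continuous_one
  have hint : IntegrableOn (fun ψ => -sliceMean L 1 F ψ) (Ioi 0) := by
    refine (integrableOn_of_sq_mul le_rfl
      (continuous_sliceMean L continuous_one hQ.smooth_source.continuous) ?_).neg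
    simpa only [mul_one, ← mul_pow] using hmean.l1BigO_sq.integrableOn ()
  have hderiv (ψ : ℝ) (hψ : ψ ∈ Ioi 0) :
      HasDerivAt (sliceMean L 1 (dPsi 1 (prandtlPotential κ Q G))) (-sliceMean L 1 F ψ) ψ := by
    rw [← hQ.sliceMean_dPsi_two_potential hκ hψ, ← dPsi_dPsi 1 1]
    exact hasDerivAt_sliceMean_one (hH.dPsi 1) ψ
  have hlim := tendsto_limUnder_of_hasDerivAt_of_integrableOn_Ioi hderiv hint
  rwa [eq_zero_of_tendsto_of_hasDerivAt (hasDerivAt_sliceMean_one hH)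
    (hQ.tendsto_sliceMean_potential hκ) hlim] at hlim

/-- Two Hardy inequalities, each of which costs two powers of the weight. -/
theorem l2BigO_sliceMean_potential {Q F G : ι → ℝ → ℝ → ℝ} (hκ : ContDiff ℝ (⊤ : ℕ∞) κ)
    (hQ : ∀ i, IsLinearPrandtl L κ (Q i) (F i) (G i)) (hF : L2BigO L (m + 4) F N) {j : ℕ}
    (hj : j ≤ 2) :
    L2BigO L m (fun i _ => sliceMean L 1 (dPsi j (prandtlPotential κ (Q i) (G i)))) N := by
  have hH (i : ι) := (hQ i).smooth_potential hκ
  have hcont (j : ℕ) (i : ι) := continuous_sliceMean L continuous_one ((hH i).dPsi j).continuous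
  have hderiv (j : ℕ) (i : ι) (ψ : ℝ) (_ : 0 < ψ) := by
    simpa only [dPsi_dPsi] using hasDerivAt_sliceMean_one (L := L) ((hH i).dPsi j) ψ
  have hF_fin (i : ι) : FiniteL2 L (wt 1 (F i)) := (hF.mono_weight (by lia)).finite i
  have htwo : L2BigO L (m + 4)
      (fun i _ => sliceMean L 1 (dPsi 2 (prandtlPotential κ (Q i) (G i)))) N :=
    ((hF.sliceMean continuous_one).const_mul (-1)).congr
      (fun i => (hcont 2 i).comp continuous_snd) fun i _ ψ hψ => by
        rw [(hQ i).sliceMean_dPsi_two_potential hκ hψ, neg_one_mul]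
  have hone : L2BigO L (m + 2)
      (fun i _ => sliceMean L 1 (dPsi 1 (prandtlPotential κ (Q i) (G i)))) N :=
    .of_hasDerivAt (hcont 1) (hderiv 1)
      (fun i => (hQ i).tendsto_sliceMean_dPsi_one_potential hκ (hF_fin i)) htwo
  have hzero : L2BigO L m
      (fun i _ => sliceMean L 1 (dPsi 0 (prandtlPotential κ (Q i) (G i)))) N := by
    refine .of_hasDerivAt (hcont 0) (hderiv 0) (fun i => ?_) hone
    simpa only [dPsi_zero] using (hQ i).tendsto_sliceMean_potential hκ
  interval_cases j
  exacts [hzero, hone.mono_weight (by lia), htwo.mono_weight (by lia)]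

theorem l2BigO_sliceMean_dPsi {Q F G : ι → ℝ → ℝ → ℝ} (hκ : ContDiff ℝ (⊤ : ℕ∞) κ)
    (hQ : ∀ i, IsLinearPrandtl L κ (Q i) (F i) (G i)) (hF : L2BigO L (m + 4) F N) {j : ℕ}
    (hj : j ≤ 2) (hG : L2BigO L m (fun i => dPsi j (G i)) N) :
    L2BigO L m (fun i _ => sliceMean L κ (dPsi j (Q i))) N := by
  refine ((l2BigO_sliceMean_potential hκ hQ hF hj).sub (hG.sliceMean continuous_one)).congr
    (fun i => (continuous_sliceMean L hκ.continuous ((hQ i).smooth.dPsi j).continuous).comp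
      continuous_snd) fun i _ ψ _ => ?_
  rw [(hQ i).sliceMean_dPsi_potential hκ, add_sub_cancel_right]

end IsLinearPrandtl

end ZeroMode

/-! ### Growth of solutions -/

section Growth

open Asymptotics

variable {ι : Type*} {L : ℝ} {m : ℕ} {N : ι → ℝ} {κ ρ : ℝ → ℝ} {P Q F G : ℝ → ℝ → ℝ}

theorem hasDerivAt_sliceSq (hP : Smooth2 P) (ψ : ℝ) :
    HasDerivAt (sliceSq L P) (2 * sliceInner L P (dPsi 1 P) ψ) ψ := by
  have hself : sliceInner L P P = sliceSq L P := by
    ext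
    simp only [sliceInner, sliceSq, sq]
  have hcomm : sliceInner L (dPsi 1 P) P = sliceInner L P (dPsi 1 P) := by
    ext
    simp only [sliceInner, mul_comm]
  simpa only [hself, hcomm, ← two_mul] using hasDerivAt_sliceInner (L := L) hP hP ψ

variable [hL : Fact (0 < L)]

/-- Integrate `∂_ψ((R - ψ) ‖P‖²)` over `[0, R]`. -/
theorem integral_sliceSq_le (hP : Smooth2 P) {R : ℝ} (hR : 0 ≤ R) :
    ∫ ψ in (0 : ℝ)..R, sliceSq L P ψ
      ≤ 2 * R * sliceSq L P 0 + 4 * R ^ 2 * ∫ ψ in (0 : ℝ)..R, sliceSq L (dPsi 1 P) ψ := by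
  have hPc := continuous_sliceSq L hP.continuous
  have hP'c := continuous_sliceSq L (hP.dPsi 1).continuous
  have hinner := continuous_sliceInner L hP.continuous (hP.dPsi 1).continuous
  have hderiv (ψ : ℝ) : HasDerivAt (fun ψ => (ψ - R) * sliceSq L P ψ)
      (sliceSq L P ψ + (ψ - R) * (2 * sliceInner L P (dPsi 1 P) ψ)) ψ := by
    simpa using ((hasDerivAt_id' ψ).sub_const R).fun_mul (hasDerivAt_sliceSq (L := L) hP ψ)
  have hint {v : ℝ → ℝ} (hv : Continuous v) := hv.intervalIntegrable (μ := volume) 0 R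
  calc ∫ ψ in (0 : ℝ)..R, sliceSq L P ψ
      ≤ ∫ ψ in (0 : ℝ)..R, 2 * (sliceSq L P ψ + (ψ - R) * (2 * sliceInner L P (dPsi 1 P) ψ))
          + 4 * R ^ 2 * sliceSq L (dPsi 1 P) ψ := by
        refine intervalIntegral.integral_mono_on hR (hint hPc) (hint (by fun_prop))
          fun ψ hψ => ?_
        have hcross := two_mul_mul_sliceInner_le (L := L) hP.continuous (hP.dPsi 1).continuous
          1 (2 * (R - ψ)) ψ
        have hsq : (2 * (R - ψ)) ^ 2 ≤ 4 * R ^ 2 := by nlinarith [hψ.1, hψ.2]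
        linarith [mul_le_mul_of_nonneg_right hsq (sliceSq_nonneg (L := L) (dPsi 1 P) ψ)]
    _ = 2 * R * sliceSq L P 0 + 4 * R ^ 2 * ∫ ψ in (0 : ℝ)..R, sliceSq L (dPsi 1 P) ψ := by
        rw [intervalIntegral.integral_add (hint (by fun_prop)) (hint (by fun_prop)),
          intervalIntegral.integral_const_mul, intervalIntegral.integral_const_mul,
          intervalIntegral.integral_eq_sub_of_hasDerivAt (fun ψ _ => hderiv ψ)
            (hint (by fun_prop))]
        ring

theorem QuadraticGrowth.of_dPsi_one (hP : Smooth2 P) (hfin : FiniteL2 L (dPsi 1 P)) :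
    QuadraticGrowth L P := by
  refine .of_bound (2 * sliceSq L P 0 + 4 * L2sq L (dPsi 1 P))
    ((eventually_ge_atTop 1).mono fun R hR => ?_)
  have hR0 : 0 ≤ R := zero_le_one.trans hR
  have hP0 := sliceSq_nonneg (L := L) P 0
  rw [Real.norm_of_nonneg
    (intervalIntegral.integral_nonneg hR0 fun _ _ => sliceSq_nonneg _ _), Real.norm_of_nonneg
    (sq_nonneg R)]
  calc _ ≤ _ := integral_sliceSq_le hP hR0
    _ ≤ 2 * R ^ 2 * sliceSq L P 0 + 4 * R ^ 2 * L2sq L (dPsi 1 P) := by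
        gcongr
        · exact le_self_pow₀ hR two_ne_zero
        · exact hfin.intervalIntegral_le (hP.dPsi 1).continuous hR0
    _ = _ := by ring

theorem L2BigO.of_dS {h : ι → ℝ → ℝ → ℝ} {j : ℕ} (hh : ∀ i, Smooth2 (h i))
    (hp : ∀ i, PeriodicS L (h i)) (hd : L2BigO L m (fun i => dS j (h i)) N) (hρ : Continuous ρ)
    (hM : ∫ s in (0 : ℝ)..L, ρ s ≠ 0) (hmean : L2BigO L m (fun i _ => sliceMean L ρ (h i)) N) :
    L2BigO L m h N := by
  induction j with
  | zero => simpa only [dS_zero] using hd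
  | succ j ih =>
    refine ih ?_
    have hd' : L2BigO L m (fun i => dS 1 (dS j (h i))) N := by
      simpa only [dS_dS, add_comm 1 j] using hd
    cases j with
    | zero =>
      exact .of_dS_one (fun i => (hh i).dS 0) hd' hρ hM (by simpa only [dS_zero] using hmean)
    | succ j =>
      refine .of_dS_one (fun i => (hh i).dS (j + 1)) hd' continuous_one
        (by simpa using hL.out.ne') (L2BigO.zero.congr ?_ fun i _ ψ _ => ?_)
      · exact fun i => (continuous_sliceMean L continuous_one
          ((hh i).dS (j + 1)).continuous).comp continuous_snd
      · rw [sliceMean_one, add_comm, ← dS_dS]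
        exact integral_dS_one_eq_zero ((hh i).dS j) ((hp i).dS j) ψ

theorem IsLinearPrandtl.quadraticGrowth {i j : ℕ} (hκ : ContDiff ℝ (⊤ : ℕ∞) κ)
    (hκp : Periodic κ L) (hM : ∫ s in (0 : ℝ)..L, κ s ≠ 0) (hQ : IsLinearPrandtl L κ Q F G)
    (hF : FiniteL2 L (wt 4 F)) (hG : ∀ j ≤ 2, FiniteL2 L (dPsi j G)) (hi : i ≤ 2)
    (hfin : FiniteL2 L (dPsi i (dS j Q))) : QuadraticGrowth L Q := by
  have hF' := hF.l2BigO hQ.smooth_source.continuous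
  have hG' (j : ℕ) (hj : j ≤ 2) : L2BigO L 0 (fun _ : Unit => dPsi j G) fun _ => 1 :=
    FiniteL2.l2BigO (by simpa only [wt_zero] using hG j hj) (hQ.smooth_flux.dPsi j).continuous
  have hmean (j : ℕ) (hj : j ≤ 2) :=
    l2BigO_sliceMean_dPsi hκ (fun _ => hQ) (m := 0) hF' hj (hG' j hj)
  have hdPsi : L2BigO L 0 (fun _ : Unit => dPsi i Q) fun _ => 1 :=
    .of_dS (j := j) (fun _ => hQ.smooth.dPsi i) (fun _ => hQ.periodic.dPsi i)
      (FiniteL2.l2BigO (by simpa only [wt_zero, hQ.smooth.dS_dPsi_comm] using hfin)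
        ((hQ.smooth.dPsi i).dS j).continuous)
      hκ.continuous hM (hmean i hi)
  have hfin' : FiniteL2 L (dPsi i Q) := wt_zero (dPsi i Q) ▸ hdPsi.finite ()
  interval_cases i
  · exact .of_finiteL2 hQ.smooth.continuous hfin'
  · exact .of_dPsi_one hQ.smooth hfin'
  · have hdS : L2BigO L 0 (fun _ : Unit => dS 1 Q) fun _ => 1 := by
      refine ((hdPsi.periodic_mul hκ.continuous hκp).add
        ((hF'.mono_weight (Nat.zero_le 4)).add (hG' 2 le_rfl))).congr
        (fun _ => (hQ.smooth.dS 1).continuous) fun _ s ψ hψ => ?_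
      rw [← hQ.heat_eq s ψ hψ, heat, add_sub_cancel]
    have hself := hdS.of_dS (fun _ => hQ.smooth) (fun _ => hQ.periodic) hκ.continuous hM
      (hmean 0 zero_le_two)
    exact .of_finiteL2 hQ.smooth.continuous (wt_zero Q ▸ hself.finite ())

end Growth

/-! ### Higher tangential derivatives -/

section TangentialDerivatives

open Asymptotics

variable {ι : Type*} {L q : ℝ} {m n : ℕ} {N : ι → ℝ} {κ : ℝ → ℝ}

theorem heat_dS_eq_dS_heat_add {h : ℝ → ℝ → ℝ} (hκ : ContDiff ℝ (⊤ : ℕ∞) κ) (hh : Smooth2 h)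
    (n : ℕ) (s ψ : ℝ) : heat κ (dS n h) s ψ = dS n (heat κ h) s ψ
      + ∑ i ∈ Finset.range n, iteratedDeriv (n - i) κ s * (n.choose i * dPsi 2 (dS i h) s ψ) := by
  have hdS := (hh.dS 1).contDiff_left ψ
  have hdPsi := (hh.dPsi 2).contDiff_left ψ
  have hheat : dS n (heat κ h) s ψ = dS n (dS 1 h) s ψ
      - iteratedDeriv n (fun s => dPsi 2 h s ψ * κ s) s := by
    simp only [dS, heat, mul_comm (κ _)]
    exact iteratedDeriv_fun_sub (contDiff_infty.1 hdS n).contDiffAt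
      (contDiff_infty.1 (hdPsi.mul hκ) n).contDiffAt
  rw [hheat, iteratedDeriv_fun_mul (contDiff_infty.1 hdPsi n).contDiffAt
    (contDiff_infty.1 hκ n).contDiffAt, Finset.sum_range_succ]
  have hterm (i : ℕ) : dPsi 2 (dS i h) s ψ = iteratedDeriv i (fun s => dPsi 2 h s ψ) s :=
    (congrFun₂ (hh.dS_dPsi_comm i 2) s ψ).symm
  have hdS_comm : dS 1 (dS n h) = dS n (dS 1 h) := by rw [dS_dS, dS_dS, add_comm]
  simp only [heat, hdS_comm, hterm, Nat.choose_self, Nat.sub_self, iteratedDeriv_zero,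
    Nat.cast_one, mul_left_comm (iteratedDeriv _ κ s), mul_comm (iteratedDeriv _ κ s), mul_assoc]
  ring

namespace IsLinearPrandtl

theorem heat_dS {Q F G : ℝ → ℝ → ℝ} (hκ : ContDiff ℝ (⊤ : ℕ∞) κ) (hQ : IsLinearPrandtl L κ Q F G)
    (n : ℕ) (s : ℝ) {ψ : ℝ} (hψ : 0 < ψ) :
    heat κ (dS n Q) s ψ = dS n F s ψ + dPsi 2 (dS n G) s ψ
      + ∑ i ∈ Finset.range n, iteratedDeriv (n - i) κ s * (n.choose i * dPsi 2 (dS i Q) s ψ) := by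
  have hdS : dS n (heat κ Q) s ψ = dS n (fun s ψ => F s ψ + dPsi 2 G s ψ) s ψ := by
    simp only [dS, hQ.heat_eq _ ψ hψ]
  rw [heat_dS_eq_dS_heat_add hκ hQ.smooth, hdS, hQ.smooth_source.dS_add (hQ.smooth_flux.dPsi 2),
    hQ.smooth_flux.dS_dPsi_comm]

variable [hL : Fact (0 < L)] {Q F G : ι → ℝ → ℝ → ℝ}

/-- The heat operator applied to `∂_s^n Q` involves only lower tangential derivatives of `Q`. -/
theorem xBigO_dS (hq : 0 < q) (hκ : ContDiff ℝ (⊤ : ℕ∞) κ) (hκp : Periodic κ L)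
    (hκq : ∀ s, κ s ∈ Icc q⁻¹ q) (hQ : ∀ i, IsLinearPrandtl L κ (Q i) (F i) (G i))
    (hgrow : ∀ i, QuadraticGrowth L (Q i))
    (hF : ∀ j ≤ n, L2BigO L (m + 4) (fun i => dS j (F i)) N)
    (hG : ∀ j ≤ n, ∀ l ≤ 2, L2BigO L m (fun i => dPsi l (dS j (G i))) N)
    (hbdry : ∀ j ≤ n + 1, (fun i => sliceSq L (dS j (Q i)) 0) =O[⊤] N) :
    XBigO L m (fun i => dS n (Q i)) N := by
  induction n using Nat.strong_induction_on with
  | _ n ih =>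
  replace ih (j : ℕ) (hj : j < n) : XBigO L m (fun i => dS j (Q i)) N :=
    ih j hj (fun l hl => hF l (by lia)) (fun l hl => hG l (by lia)) fun l hl => hbdry l (by lia)
  have hheat : L2BigO L m (fun i => heat κ (dS n (Q i))) N := by
    refine ((((hF n le_rfl).mono_weight (m.le_add_right 4)).add (hG n le_rfl 2 le_rfl)).add
      (.sum (J := Finset.range n) fun j hj => ?_)).congr
      (fun i => continuous_heat hκ.continuous ((hQ i).smooth.dS n))
      fun i s ψ hψ => (hQ i).heat_dS hκ n s hψ
    exact ((ih j (Finset.mem_range.1 hj)).dPsi_two.const_mul _).periodic_mul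
      ((contDiff_infty.1 hκ _).continuous_iteratedDeriv _ le_rfl) (periodic_iteratedDeriv hκp _)
  have hbdry' (j : ℕ) (hj : j ≤ 1) : (fun i => sliceSq L (dS j (dS n (Q i))) 0) =O[⊤] N := by
    simpa only [dS_dS] using hbdry (j + n) (by lia)
  have hlow : (∀ i, QuadraticGrowth L (dS n (Q i))) ∧
      L2BigO L m (fun i _ => sliceMean L κ (dS n (Q i))) N := by
    cases n with
    | zero =>
      simp only [dS_zero]
      exact ⟨hgrow, by simpa only [dPsi_zero, dS_zero] using
        l2BigO_sliceMean_dPsi hκ hQ (hF 0 le_rfl) zero_le_two (hG 0 le_rfl 0 zero_le_two)⟩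
    | succ n =>
      have hdS : L2BigO L m (fun i => dS (n + 1) (Q i)) N := by
        simpa only [dS_dS, add_comm 1 n] using (ih n n.lt_succ_self).dS_one
      exact ⟨fun i => .of_finiteL2 (hdS.continuous i)
        (wt_zero (dS (n + 1) (Q i)) ▸ (hdS.mono_weight m.zero_le).finite i),
        hdS.sliceMean hκ.continuous⟩
  exact .of_heat hq hκ.continuous hκp hκq (fun i => (hQ i).smooth.dS n)
    (fun i => (hQ i).periodic.dS n) hlow.1 hbdry' hheat hlow.2

end IsLinearPrandtl

end TangentialDerivatives

/-! ### The full estimate -/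

section FullEstimate

open Asymptotics

variable {ι : Type*} {L q : ℝ} {k m : ℕ} {N : ι → ℝ} {κ : ℝ → ℝ} {Q F G : ℝ → ℝ → ℝ}

/-- The norm of the data `F`, `G`, `b` in the a priori estimate, as a sum of the norms of the
weighted derivatives of order at most `k` of `F` and `G` and the `H^{k+1}` norm of `b`. -/
noncomputable def prandtlDataNorm (L : ℝ) (k m : ℕ) (F G : ℝ → ℝ → ℝ) (b : ℝ → ℝ) : ℝ :=
  (∑ k' ∈ Finset.range (k + 1), √(L2sq L (wt (m + 4) (dS k' F))))
    + (∑ k' ∈ Finset.range (k + 1), ∑ j ∈ Finset.range 3, √(L2sq L (wt m (dPsi j (dS k' G)))))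
    + √(HnormSq L (k + 1) b)

theorem prandtlDataNorm_nonneg (L : ℝ) (k m : ℕ) (F G : ℝ → ℝ → ℝ) (b : ℝ → ℝ) :
    0 ≤ prandtlDataNorm L k m F G b := by
  unfold prandtlDataNorm
  positivity

theorem L2sq_source_le_sq_prandtlDataNorm {j : ℕ} (hj : j ≤ k) (m : ℕ) (F G : ℝ → ℝ → ℝ)
    (b : ℝ → ℝ) : L2sq L (wt (m + 4) (dS j F)) ≤ prandtlDataNorm L k m F G b ^ 2 := by
  rw [← Real.sqrt_le_left (prandtlDataNorm_nonneg ..), prandtlDataNorm, add_assoc]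
  refine le_add_of_le_of_nonneg ?_ (by positivity)
  exact Finset.single_le_sum (f := fun j => √(L2sq L (wt (m + 4) (dS j F))))
    (fun _ _ => Real.sqrt_nonneg _) (by simpa using hj)

theorem L2sq_flux_le_sq_prandtlDataNorm {j l : ℕ} (hj : j ≤ k) (hl : l ≤ 2) (m : ℕ)
    (F G : ℝ → ℝ → ℝ) (b : ℝ → ℝ) :
    L2sq L (wt m (dPsi l (dS j G))) ≤ prandtlDataNorm L k m F G b ^ 2 := by
  rw [← Real.sqrt_le_left (prandtlDataNorm_nonneg ..), prandtlDataNorm, add_right_comm]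
  refine le_add_of_nonneg_of_le (by positivity) ?_
  calc √(L2sq L (wt m (dPsi l (dS j G))))
      ≤ ∑ l ∈ Finset.range 3, √(L2sq L (wt m (dPsi l (dS j G)))) :=
        Finset.single_le_sum (f := fun l => √(L2sq L (wt m (dPsi l (dS j G)))))
          (fun _ _ => Real.sqrt_nonneg _) (by simp; lia)
    _ ≤ _ := Finset.single_le_sum
        (f := fun j => ∑ l ∈ Finset.range 3, √(L2sq L (wt m (dPsi l (dS j G)))))
        (fun _ _ => by positivity) (by simpa using hj)

theorem sliceSq_dS_zero_le_sq_prandtlDataNorm (hL : 0 ≤ L) {j : ℕ} (hj : j ≤ k + 1) (m : ℕ)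
    (F G Q : ℝ → ℝ → ℝ) : sliceSq L (dS j Q) 0 ≤ prandtlDataNorm L k m F G (Q · 0) ^ 2 := by
  have hnonneg (j : ℕ) : 0 ≤ ∫ s in (0 : ℝ)..L, iteratedDeriv j (Q · 0) s ^ 2 :=
    intervalIntegral.integral_nonneg hL fun _ _ => sq_nonneg _
  calc sliceSq L (dS j Q) 0 ≤ HnormSq L (k + 1) (Q · 0) :=
        Finset.single_le_sum (f := fun j => ∫ s in (0 : ℝ)..L, iteratedDeriv j (Q · 0) s ^ 2)
          (fun j _ => hnonneg j) (by simp; lia)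
    _ ≤ prandtlDataNorm L k m F G (Q · 0) ^ 2 := by
        rw [← Real.sqrt_le_left (prandtlDataNorm_nonneg ..), prandtlDataNorm]
        exact le_add_of_nonneg_left (by positivity)

theorem exists_forall_mem_Icc_inv (hL : L ≠ 0) (hκ : Continuous κ) (hκp : Periodic κ L)
    (hpos : ∀ s, 0 < κ s) : ∃ q > 0, ∀ s, κ s ∈ Icc q⁻¹ q := by
  obtain ⟨M, hM⟩ := (hκp.compact_of_continuous hL hκ).bddAbove
  obtain ⟨M', hM'⟩ := ((hκp.comp Inv.inv).compact_of_continuous hL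
    (hκ.inv₀ fun s => (hpos s).ne')).bddAbove
  refine ⟨max M M', (hpos 0).trans_le ((hM (mem_range_self 0)).trans (le_max_left ..)), fun s =>
    ⟨inv_le_of_inv_le₀ (hpos s) ((hM' (mem_range_self s)).trans (le_max_right ..)),
      (hM (mem_range_self s)).trans (le_max_left ..)⟩⟩

variable [hL : Fact (0 < L)]

theorem isBigO_XnormSq {Q : ι → ℝ → ℝ → ℝ} (hX : ∀ n ≤ k, XBigO L m (fun i => dS n (Q i)) N) :
    (fun i => XnormSq L k m (Q i)) =O[⊤] N := by
  refine .fun_sum fun n hn => .fun_sum fun m' hm' => ?_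
  obtain ⟨hself, hdS, hdPsi, hdPsi2⟩ := hX n (Finset.mem_range_succ_iff.1 hn)
  simp only [dS_dS, add_comm 1 n] at hdS
  have hm := Finset.mem_range_succ_iff.1 hm'
  exact (((hself.mono_weight hm).isBigO.add (hdS.mono_weight hm).isBigO).add
    (hdPsi.mono_weight hm).isBigO).add (hdPsi2.mono_weight hm).isBigO

namespace IsLinearPrandtl

/-- A solution growing too fast has no finite norm at all, so that `XnormSq` takes the junk value
of a divergent integral. -/
theorem XnormSq_eq_zero_of_not_quadraticGrowth (hκ : ContDiff ℝ (⊤ : ℕ∞) κ) (hκp : Periodic κ L)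
    (hM : ∫ s in (0 : ℝ)..L, κ s ≠ 0) (hQ : IsLinearPrandtl L κ Q F G) (hF : FiniteL2 L (wt 4 F))
    (hG : ∀ j ≤ 2, FiniteL2 L (dPsi j G)) (hgrow : ¬QuadraticGrowth L Q) (k m : ℕ) :
    XnormSq L k m Q = 0 := by
  have hzero (m : ℕ) {i : ℕ} (hi : i ≤ 2) (j : ℕ) : L2sq L (wt m (dPsi i (dS j Q))) = 0 := by
    refine integral_undef fun hfin => hgrow (hQ.quadraticGrowth hκ hκp hM hF hG hi (j := j) ?_)
    exact wt_zero (dPsi i (dS j Q)) ▸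
      FiniteL2.mono_weight hfin ((hQ.smooth.dS j).dPsi i).continuous m.zero_le
  have hzero' (m j : ℕ) : L2sq L (wt m (dS j Q)) = 0 := by
    simpa only [dPsi_zero] using hzero m zero_le_two j
  simp only [XnormSq, hzero', hzero _ one_le_two, hzero _ le_rfl, add_zero, Finset.sum_const_zero]

theorem exists_XnormSq_le (hq : 0 < q) (hκ : ContDiff ℝ (⊤ : ℕ∞) κ) (hκp : Periodic κ L)
    (hκq : ∀ s, κ s ∈ Icc q⁻¹ q) (k m : ℕ) :
    ∃ C, ∀ Q F G, IsLinearPrandtl L κ Q F G → QuadraticGrowth L Q →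
      (∀ j ≤ k, FiniteL2 L (wt (m + 4) (dS j F))) →
      (∀ j ≤ k, ∀ l ≤ 2, FiniteL2 L (wt m (dPsi l (dS j G)))) →
      XnormSq L k m Q ≤ C * prandtlDataNorm L k m F G (Q · 0) ^ 2 := by
  let ι := {d : Fin 3 → ℝ → ℝ → ℝ // IsLinearPrandtl L κ (d 0) (d 1) (d 2) ∧
    QuadraticGrowth L (d 0) ∧ (∀ j ≤ k, FiniteL2 L (wt (m + 4) (dS j (d 1)))) ∧
    ∀ j ≤ k, ∀ l ≤ 2, FiniteL2 L (wt m (dPsi l (dS j (d 2))))}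
  let N (d : ι) : ℝ := prandtlDataNorm L k m (d.1 1) (d.1 2) (d.1 0 · 0) ^ 2
  have hN {u : ι → ℝ} (hu : ∀ d, 0 ≤ u d) (hle : ∀ d, u d ≤ N d) : u =O[⊤] N :=
    .of_norm_le fun d => (Real.norm_of_nonneg (hu d)).trans_le (hle d)
  have hF (j : ℕ) (hj : j ≤ k) : L2BigO L (m + 4) (fun d : ι => dS j (d.1 1)) N :=
    ⟨fun d => (d.2.1.smooth_source.dS j).continuous, fun d => d.2.2.2.1 j hj,
      hN (fun _ => L2sq_nonneg ..) fun _ => L2sq_source_le_sq_prandtlDataNorm hj ..⟩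
  have hG (j : ℕ) (hj : j ≤ k) (l : ℕ) (hl : l ≤ 2) :
      L2BigO L m (fun d : ι => dPsi l (dS j (d.1 2))) N :=
    ⟨fun d => ((d.2.1.smooth_flux.dS j).dPsi l).continuous, fun d => d.2.2.2.2 j hj l hl,
      hN (fun _ => L2sq_nonneg ..) fun _ => L2sq_flux_le_sq_prandtlDataNorm hj hl ..⟩
  have hbdry (j : ℕ) (hj : j ≤ k + 1) : (fun d : ι => sliceSq L (dS j (d.1 0)) 0) =O[⊤] N :=
    hN (fun _ => sliceSq_nonneg ..) fun _ =>
      sliceSq_dS_zero_le_sq_prandtlDataNorm hL.out.le hj ..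
  have hX := isBigO_XnormSq fun n (hn : n ≤ k) => xBigO_dS (N := N) hq hκ hκp hκq
    (fun d : ι => d.2.1) (fun d => d.2.2.1) (fun j hj => hF j (hj.trans hn))
    (fun j hj => hG j (hj.trans hn)) fun j hj => hbdry j (by lia)
  obtain ⟨C, hC⟩ := isBigO_top.1 hX
  refine ⟨C, fun Q F G hQ hgrow hFfin hGfin => (le_abs_self _).trans ?_⟩
  have := hC ⟨![Q, F, G], hQ, hgrow, hFfin, hGfin⟩
  rwa [Real.norm_of_nonneg (sq_nonneg _)] at this

theorem exists_Xnorm_le (hκ : ContDiff ℝ (⊤ : ℕ∞) κ) (hκp : Periodic κ L)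
    (hκpos : ∀ s, 0 < κ s) (k m : ℕ) :
    ∃ C > 0, ∀ Q F G, IsLinearPrandtl L κ Q F G →
      (∀ j ≤ k, FiniteL2 L (wt (m + 4) (dS j F))) →
      (∀ j ≤ k, ∀ l ≤ 2, FiniteL2 L (wt m (dPsi l (dS j G)))) →
      Xnorm L k m Q ≤ C * prandtlDataNorm L k m F G (Q · 0) := by
  obtain ⟨q, hq, hκq⟩ := exists_forall_mem_Icc_inv hL.out.ne' hκ.continuous hκp hκpos
  obtain ⟨C, hC⟩ := exists_XnormSq_le hq hκ hκp hκq k m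
  have hM : 0 < ∫ s in (0 : ℝ)..L, κ s :=
    intervalIntegral.intervalIntegral_pos_of_pos (hκ.continuous.intervalIntegrable 0 L) hκpos hL.out
  refine ⟨|C| + 1, by positivity, fun Q F G hQ hF hG => ?_⟩
  have hD := prandtlDataNorm_nonneg L k m F G (Q · 0)
  rw [Xnorm, Real.sqrt_le_left (by positivity)]
  by_cases hgrow : QuadraticGrowth L Q
  · calc XnormSq L k m Q ≤ C * prandtlDataNorm L k m F G (Q · 0) ^ 2 := hC Q F G hQ hgrow hF hG
      _ ≤ (|C| + 1) ^ 2 * prandtlDataNorm L k m F G (Q · 0) ^ 2 := by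
          gcongr
          nlinarith [le_abs_self C, abs_nonneg C]
      _ = _ := by ring
  · have hF0 : FiniteL2 L (wt 4 F) :=
      FiniteL2.mono_weight (by simpa only [dS_zero] using hF 0 k.zero_le)
        hQ.smooth_source.continuous (by lia)
    have hG0 (j : ℕ) (hj : j ≤ 2) : FiniteL2 L (dPsi j G) :=
      wt_zero (dPsi j G) ▸ FiniteL2.mono_weight (by simpa only [dS_zero] using hG 0 k.zero_le j hj)
        (hQ.smooth_flux.dPsi j).continuous m.zero_le
    rw [hQ.XnormSq_eq_zero_of_not_quadraticGrowth hκ hκp hM.ne' hF0 hG0 hgrow]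
    positivity

end IsLinearPrandtl

end FullEstimate

/-- **Full a priori estimate for the abstract linear Prandtl system (Prop. 5.1).** -/
theorem linear_prandtl_full_estimate
    (L : ℝ) (hL : 0 < L)
    (q_e : ℝ → ℝ) (hqe : ContDiff ℝ (⊤ : ℕ∞) q_e) (hqeper : Function.Periodic q_e L)
    (hqepos : ∀ s, 0 < q_e s)
    (ω₀ : ℝ) (hω₀ : 0 < ω₀) (k m : ℕ) :
    ∃ C > (0:ℝ), ∀ Q F G : ℝ → ℝ → ℝ, ∀ b : ℝ → ℝ,
      Smooth2 Q → PeriodicS L Q → Smooth2 F → PeriodicS L F →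
      Smooth2 G → PeriodicS L G → ContDiff ℝ (⊤ : ℕ∞) b → Function.Periodic b L →
      (∀ s : ℝ, ∀ ψ > (0:ℝ),
        dS 1 Q s ψ - ω₀ * q_e s * dPsi 2 Q s ψ = F s ψ + dPsi 2 G s ψ) →
      (∀ s : ℝ, Q s 0 = b s) →
      (∀ s : ℝ, Tendsto (fun ψ => Q s ψ) atTop (nhds 0)) →
      Tendsto (fun ψ => ∫ s in (0:ℝ)..L, q_e s * Q s ψ) atTop (nhds 0) →
      Tendsto (fun ψ => deriv (fun ψ' => ∫ s in (0:ℝ)..L, q_e s * Q s ψ') ψ)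
        atTop (nhds 0) →
      Tendsto (fun ψ => ∫ s in (0:ℝ)..L, G s ψ) atTop (nhds 0) →
      -- Feynman–Lagerstrom compatibility condition
      ((∫ s in (0:ℝ)..L, q_e s * b s)
        = -(1 / ω₀) * ((∫ y in Ioi (0:ℝ), y * ∫ s in (0:ℝ)..L, F s y)
            + ∫ s in (0:ℝ)..L, G s 0)) →
      -- finiteness of the right-hand side
      (∀ k' ≤ k, FiniteL2 L (wt (m+4) (dS k' F))) →
      (∀ k' ≤ k, ∀ j ≤ 2, FiniteL2 L (wt m (dPsi j (dS k' G)))) →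
      Xnorm L k m Q
        ≤ C * ((∑ k' ∈ Finset.range (k+1),
              Real.sqrt (L2sq L (wt (m+4) (dS k' F))))
            + (∑ k' ∈ Finset.range (k+1), ∑ j ∈ Finset.range 3,
              Real.sqrt (L2sq L (wt m (dPsi j (dS k' G)))))
            + Real.sqrt (HnormSq L (k+1) b)) := by
  have : Fact (0 < L) := ⟨hL⟩
  obtain ⟨C, hC, hbound⟩ := IsLinearPrandtl.exists_Xnorm_le (contDiff_const.mul hqe)
    (fun s => congrArg (ω₀ * ·) (hqeper s)) (fun s => mul_pos hω₀ (hqepos s)) k m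
  refine ⟨C, hC, fun Q F G b hQ hQper hF _ hG _ _ _ hpde hbc _ hmean _ hmeanG _ hFfin hGfin => ?_⟩
  obtain rfl : (Q · 0) = b := funext hbc
  have hmean' : Tendsto (sliceMean L (fun s => ω₀ * q_e s) Q) atTop (nhds 0) := by
    unfold sliceMean
    simpa only [mul_assoc, intervalIntegral.integral_const_mul, mul_zero] using hmean.const_mul ω₀
  have hmeanG' : Tendsto (sliceMean L 1 G) atTop (nhds 0) := by
    simpa only [sliceMean_one] using hmeanG
  exact hbound Q F G ⟨hQ, hF, hG, hQper, hpde, hmean', hmeanG'⟩ hFfin hGfin
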